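/- arXiv:2302.00608 — 7 statements merged into one kernel-verified Lean document; each statement's English description precedes it below -/
import Mathlib

section
/- Let G be a finite perfect graph with vertex set V and let w : V → ℕ be an integer weight function. Then there exists an integer-valued dual-feasible function y on the maximal cliques of G (i.e., y(Q) ∈ ℕ for every maximal clique Q and ∑_{Q ∋ v} y(Q) ≥ w(v) for every vertex v ∈ V) such that ∑_Q y(Q) equals the maximum of ∑_{v ∈ O} w(v) over all stable sets O of G. In other words, the linear system {x ≥ 0, ∑_{v ∈ Q} x_v ≤ 1 for every maximal clique Q of G} is totally dual integral. -/
/-!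
The argument is Lovász's, in weighted form and without constructing replicated graphs.

* `exists_stable_cover`: in a perfect graph, if every clique has `n`-weight at most `k`, then `k`
  stable sets cover each vertex `v` at least `n v` times. This is the replication lemma together
  with perfection. For `0/1` weights it is a colouring of the induced subgraph on the support.
  If `n v ≥ 2`, cover `n - e_v` by `k` stable sets, pick one, `A`, containing `v`, and lower the
  weight by one on `A \ {v}`: a clique of `(n - e_v)`-weight `k` avoids `v` and meets every set of
  the cover, so afterwards every clique has weight at most `k - 1`. Cover again and add `A`.
* `exists_clique_hitting`: for `w ≠ 0` some clique meets all maximum-weight stable sets. Otherwise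
  choose for each of the `N` cliques `K` a maximum-weight stable set `O K` disjoint from it, and let
  `n v` count the `K` with `v ∈ O K`. Every clique has `n`-weight at most `N - 1`, so `N - 1` stable
  sets cover `n`; but `∑ v, n v * w v` is `N` times the maximum weight, a contradiction.

The theorem follows by induction on the maximum weight of a stable set: enlarge the clique
to a maximal one, give it one unit of dual weight, and lower `w` by one on it, which lowers
that maximum (`costNat_lower_lt`).
-/

open Finset

/-- `O` is a stable (independent) set in `G`. -/
def IsStableSet {V : Type*} (G : SimpleGraph V) (O : Finset V) : Prop :=
  ∀ u ∈ O, ∀ v ∈ O, ¬ G.Adj u v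

/-- `Q` is a clique in `G`. -/
def IsCliqueF {V : Type*} (G : SimpleGraph V) (Q : Finset V) : Prop :=
  ∀ u ∈ Q, ∀ v ∈ Q, u ≠ v → G.Adj u v

/-- `Q` is a maximal clique in `G`. -/
def IsMaximalCliqueF {V : Type*} (G : SimpleGraph V) (Q : Finset V) : Prop :=
  IsCliqueF G Q ∧ ∀ Q', IsCliqueF G Q' → Q ⊆ Q' → Q' = Q

open Classical in
/-- The set of maximal cliques of `G`. -/
noncomputable def maximalCliques {V : Type*} (G : SimpleGraph V) [Fintype V] :
    Finset (Finset V) :=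
  univ.powerset.filter (IsMaximalCliqueF G)

open Classical in
/-- The set of all cliques of `G`. -/
noncomputable def cliques {V : Type*} (G : SimpleGraph V) [Fintype V] :
    Finset (Finset V) :=
  univ.powerset.filter (IsCliqueF G)

open Classical in
/-- `cost S` : maximum weight of a stable set contained in `S`. -/
noncomputable def cost {V : Type*} (G : SimpleGraph V) [Fintype V] (w : V → ℚ)
    (S : Finset V) : ℚ :=
  (S.powerset.filter (IsStableSet G)).sup'
    ⟨∅, by simp [IsStableSet]⟩ (fun O => ∑ v ∈ O, w v)

open Classical in
/-- Integer version of `cost`. -/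
noncomputable def costNat {V : Type*} (G : SimpleGraph V) [Fintype V] (w : V → ℕ)
    (S : Finset V) : ℕ :=
  (S.powerset.filter (IsStableSet G)).sup'
    ⟨∅, by simp [IsStableSet]⟩ (fun O => ∑ v ∈ O, w v)

open Classical in
/-- `money y S` : total dual weight of the maximal cliques intersecting `S`. -/
noncomputable def money {V : Type*} (G : SimpleGraph V) [Fintype V]
    (y : Finset V → ℚ) (S : Finset V) : ℚ :=
  ∑ Q ∈ (maximalCliques G).filter (fun Q => (Q ∩ S).Nonempty), y Q

/-- `G` is a perfect graph: for every induced subgraph, the clique number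
equals the chromatic number. -/
def IsPerfect {V : Type*} (G : SimpleGraph V) [Fintype V] : Prop :=
  ∀ S : Finset V,
    ((G.induce (S : Set V)).cliqueNum : ℕ∞) = (G.induce (S : Set V)).chromaticNumber

open Classical in
lemma sum_le_costNat {V : Type*} [Fintype V] (G : SimpleGraph V) (w : V → ℕ) {O : Finset V}
    (hO : IsStableSet G O) : ∑ v ∈ O, w v ≤ costNat G w univ := by
  unfold costNat
  exact Finset.le_sup' (fun O : Finset V => ∑ v ∈ O, w v) (by simpa using hO)

open Classical in
lemma costNat_le {V : Type*} [Fintype V] (G : SimpleGraph V) (w : V → ℕ) {m : ℕ}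
    (h : ∀ O, IsStableSet G O → ∑ v ∈ O, w v ≤ m) : costNat G w univ ≤ m := by
  unfold costNat
  apply Finset.sup'_le
  intro O hO
  exact h O (by simpa using hO)

lemma exists_maximalClique {V : Type*} [Fintype V] (G : SimpleGraph V) {K : Finset V}
    (hK : IsCliqueF G K) : ∃ Q ∈ maximalCliques G, K ⊆ Q := by
  classical
  obtain ⟨Q, hKQ, hQ⟩ := (Set.toFinite {Q : Finset V | IsCliqueF G Q}).exists_le_maximal hK
  refine ⟨Q, ?_, hKQ⟩
  simp only [maximalCliques, mem_filter, mem_powerset, subset_univ, true_and]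
  exact ⟨hQ.prop, fun Q' hQ' h => (hQ.eq_of_le hQ' h).symm⟩

open Classical in
lemma card_inter_le_one {V : Type*} (G : SimpleGraph V) {K O : Finset V}
    (hK : IsCliqueF G K) (hO : IsStableSet G O) :
    (∑ v ∈ K, if v ∈ O then 1 else 0) ≤ 1 := by
  rw [← Finset.card_filter, Finset.card_le_one]
  intro a ha b hb
  simp only [mem_filter] at ha hb
  by_contra hab
  exact hO a ha.2 b hb.2 (hK a ha.1 b hb.1 hab)

open Classical in
/-- The `0/1` case of `exists_stable_cover`: colour the subgraph induced on the support. -/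
lemma exists_stable_cover_of_le_one {V : Type*} [Fintype V] (G : SimpleGraph V)
    (hG : IsPerfect G) (n : V → ℕ) (k : ℕ) (hn : ∀ v, n v ≤ 1)
    (hk : ∀ K, IsCliqueF G K → ∑ v ∈ K, n v ≤ k) :
    ∃ c : ℕ → Finset V, (∀ i, IsStableSet G (c i)) ∧
      ∀ v, n v ≤ ∑ i ∈ range k, if v ∈ c i then 1 else 0 := by
  set S : Finset V := univ.filter (fun v => n v = 1) with hS
  have hω : (G.induce (S : Set V)).cliqueNum ≤ k := by
    obtain ⟨K, hK⟩ := (G.induce (S : Set V)).exists_isNClique_cliqueNum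
    have h1 : IsCliqueF G (K.map (Function.Embedding.subtype _)) := by
      intro a ha b hb hab
      simp only [mem_map, Function.Embedding.subtype_apply] at ha hb
      obtain ⟨a, ha, rfl⟩ := ha
      obtain ⟨b, hb, rfl⟩ := hb
      exact hK.isClique ha hb (fun h => hab (by rw [h]))
    have h2 := hk _ h1
    rw [Finset.sum_map, Finset.sum_congr rfl (g := fun _ => 1), ← Finset.card_eq_sum_ones,
      hK.card_eq] at h2
    · exact h2
    · intro x _
      have := x.2
      simpa [hS] using this
  have hcol : (G.induce (S : Set V)).Colorable k := by
    rw [← SimpleGraph.chromaticNumber_le_iff_colorable, ← hG S]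
    exact_mod_cast hω
  obtain ⟨C⟩ := hcol
  refine ⟨fun i => univ.filter (fun v => ∃ h : v ∈ (S : Set V), (C ⟨v, h⟩ : ℕ) = i), ?_, ?_⟩
  · intro i a ha b hb hab
    simp only [mem_filter, mem_univ, true_and] at ha hb
    obtain ⟨ha, hai⟩ := ha
    obtain ⟨hb, hbi⟩ := hb
    have hadj : (G.induce (S : Set V)).Adj ⟨a, ha⟩ ⟨b, hb⟩ := hab
    exact C.valid hadj (Fin.ext (hai.trans hbi.symm))
  · intro v
    by_cases hv : n v = 1
    · have hvS : v ∈ (S : Set V) := by simp [hS, hv]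
      rw [hv]
      refine le_trans ?_ (Finset.single_le_sum (fun _ _ => Nat.zero_le _)
        (mem_range.2 (C ⟨v, hvS⟩).isLt))
      rw [if_pos]
      exact mem_filter.2 ⟨mem_univ _, hvS, rfl⟩
    · have := hn v
      have h0 : n v = 0 := by omega
      simp [h0]

open Classical in
/-- Weighted colouring of a perfect graph: if all cliques have `n`-weight at most `k`, then the
stable sets `c 0, …, c (k - 1)` cover every vertex `v` at least `n v` times. -/
lemma exists_stable_cover {V : Type*} [Fintype V] (G : SimpleGraph V)
    (hG : IsPerfect G) (n : V → ℕ) (k : ℕ)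
    (hk : ∀ K, IsCliqueF G K → ∑ v ∈ K, n v ≤ k) :
    ∃ c : ℕ → Finset V, (∀ i, IsStableSet G (c i)) ∧
      ∀ v, n v ≤ ∑ i ∈ range k, if v ∈ c i then 1 else 0 := by
  induction hN : ∑ v, n v using Nat.strong_induction_on generalizing n k with
  | _ N ih =>
  subst hN
  by_cases hle : ∀ v, n v ≤ 1
  · exact exists_stable_cover_of_le_one G hG n k hle hk
  push Not at hle
  obtain ⟨v, hv⟩ := hle
  obtain ⟨m, rfl⟩ : ∃ m, k = m + 1 := by
    have := hk {v} (by intro a ha b hb hab; simp_all)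
    rw [sum_singleton] at this
    exact ⟨k - 1, by omega⟩
  set n' : V → ℕ := fun u => if u = v then n u - 1 else n u with hn'
  have hn'le : ∀ u, n' u ≤ n u := fun u => by simp only [hn']; split_ifs <;> omega
  have hn'v : n' v < n v := by simp only [hn', if_true]; omega
  have hlt : ∑ u, n' u < ∑ u, n u :=
    Finset.sum_lt_sum (fun u _ => hn'le u) ⟨v, mem_univ v, hn'v⟩
  obtain ⟨c, hc, hcov⟩ := ih _ hlt n' (m + 1)
    (fun K hK => (Finset.sum_le_sum fun u _ => hn'le u).trans (hk K hK)) rfl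
  obtain ⟨j, hj, hvj⟩ : ∃ j ∈ range (m + 1), v ∈ c j := by
    by_contra! hcon
    have h1 := hcov v
    rw [Finset.sum_eq_zero (fun i hi => if_neg (hcon i hi))] at h1
    simp only [hn', if_true] at h1
    omega
  set n'' : V → ℕ := fun u => if u ∈ c j ∧ u ≠ v then n' u - 1 else n' u with hn''
  have hn''le : ∀ u, n'' u ≤ n' u := fun u => by simp only [hn'']; split_ifs <;> omega
  have hbound : ∀ K, IsCliqueF G K → ∑ u ∈ K, n'' u ≤ m := by
    intro K hK
    by_cases hKm : ∑ u ∈ K, n' u ≤ m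
    · exact (Finset.sum_le_sum fun u _ => hn''le u).trans hKm
    have hKn := hk K hK
    have hvK : v ∉ K := fun hvK => by
      have := Finset.sum_lt_sum (fun u _ => hn'le u) ⟨v, hvK, hn'v⟩
      omega
    -- A clique of full `n'`-weight meets `c j` at a vertex of positive weight.
    obtain ⟨u, huK, huj, hu0⟩ : ∃ u ∈ K, u ∈ c j ∧ n' u ≠ 0 := by
      by_contra! hcon
      set K' := K.filter (fun u => n' u ≠ 0) with hK'
      have hK'c : IsCliqueF G K' := fun a ha b hb =>
        hK a (mem_filter.1 ha).1 b (mem_filter.1 hb).1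
      have e1 : ∑ u ∈ K', n' u = ∑ u ∈ K, n' u := Finset.sum_filter_ne_zero K
      have e2 : ∑ u ∈ K', n' u ≤ ∑ i ∈ range (m + 1), ∑ u ∈ K', if u ∈ c i then 1 else 0 := by
        rw [Finset.sum_comm]
        exact Finset.sum_le_sum fun u _ => hcov u
      have e3 : ∑ i ∈ range (m + 1), (∑ u ∈ K', if u ∈ c i then 1 else 0)
          < ∑ i ∈ range (m + 1), 1 := by
        refine Finset.sum_lt_sum (fun i _ => card_inter_le_one G hK'c (hc i)) ⟨j, hj, ?_⟩
        rw [Finset.sum_eq_zero]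
        · exact Nat.one_pos
        · intro u hu
          rw [hK', mem_filter] at hu
          exact if_neg fun h => hu.2 (hcon u hu.1 h)
      simp only [sum_const, card_range, smul_eq_mul, mul_one] at e3
      omega
    have huv : u ≠ v := fun h => hvK (h ▸ huK)
    have : ∑ u ∈ K, n'' u < ∑ u ∈ K, n' u := by
      refine Finset.sum_lt_sum (fun u _ => hn''le u) ⟨u, huK, ?_⟩
      simp only [hn'']
      rw [if_pos ⟨huj, huv⟩]
      omega
    have h2 : ∑ u ∈ K, n' u ≤ ∑ u ∈ K, n u := Finset.sum_le_sum fun u _ => hn'le u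
    omega
  obtain ⟨d, hd, hdcov⟩ := ih _ ((Finset.sum_le_sum fun u _ => hn''le u).trans_lt hlt) n'' m
    hbound rfl
  refine ⟨Function.update d m (c j), ?_, ?_⟩
  · intro i
    by_cases hi : i = m
    · subst hi; simpa using hc j
    · simpa [Function.update_of_ne hi] using hd i
  · intro u
    rw [Finset.sum_range_succ, Function.update_self,
      Finset.sum_congr rfl (g := fun i => if u ∈ d i then 1 else 0)]
    · have h1 := hdcov u
      refine le_trans ?_ (Nat.add_le_add_right h1 _)
      simp only [hn'', hn']
      by_cases huv : u = v
      · subst huv; simp only [hvj, if_true, ne_eq, not_true_eq_false, and_false, if_false]; omega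
      · by_cases huj : u ∈ c j
        · simp only [huv, huj, ne_eq, not_false_eq_true, and_self, if_true, if_false]; omega
        · simp [huv, huj]
    · intro i hi
      rw [Function.update_of_ne (ne_of_lt (mem_range.1 hi))]

open Classical in
lemma sum_count_mul {V ι : Type*} [Fintype V] (w : V → ℕ) (s : Finset ι) (f : ι → Finset V) :
    ∑ v, (∑ i ∈ s, if v ∈ f i then 1 else 0) * w v = ∑ i ∈ s, ∑ v ∈ f i, w v := by
  simp only [Finset.sum_mul]
  rw [Finset.sum_comm]
  refine Finset.sum_congr rfl fun i _ => ?_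
  simp

open Classical in
lemma exists_clique_hitting {V : Type*} [Fintype V] (G : SimpleGraph V)
    (hG : IsPerfect G) (w : V → ℕ) (hw : ∃ v, w v ≠ 0) :
    ∃ K, IsCliqueF G K ∧ ∀ O, IsStableSet G O → ∑ v ∈ O, w v = costNat G w univ →
      ∃ v ∈ K, v ∈ O := by
  by_contra! hcon
  have hpos : 0 < costNat G w univ := by
    obtain ⟨v, hv⟩ := hw
    have := sum_le_costNat G w (O := {v}) (by intro a ha b hb; simp_all)
    rw [sum_singleton] at this
    omega
  choose! O hO hOw hOd using hcon
  set n : V → ℕ := fun v => ∑ K ∈ cliques G, if v ∈ O K then 1 else 0 with hn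
  have hmem : ∀ K, K ∈ cliques G ↔ IsCliqueF G K := fun K => by simp [cliques]
  have hbound : ∀ K, IsCliqueF G K → ∑ v ∈ K, n v ≤ #(cliques G) - 1 := by
    intro K hK
    apply Nat.le_sub_one_of_lt
    simp only [hn]
    rw [Finset.sum_comm, Finset.card_eq_sum_ones]
    refine Finset.sum_lt_sum
      (fun L hL => card_inter_le_one G hK (hO L ((hmem L).1 hL))) ⟨K, (hmem K).2 hK, ?_⟩
    rw [Finset.sum_eq_zero (fun u hu => if_neg (hOd K hK u hu))]
    exact Nat.one_pos
  obtain ⟨c, hc, hcov⟩ := exists_stable_cover G hG n _ hbound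
  have e1 : ∑ v, n v * w v = #(cliques G) * costNat G w univ := by
    simp only [hn]
    rw [sum_count_mul, Finset.sum_congr rfl (fun K hK => hOw K ((hmem K).1 hK)), sum_const, smul_eq_mul]
  have e2 : ∑ v, n v * w v ≤ (#(cliques G) - 1) * costNat G w univ := by
    refine (Finset.sum_le_sum fun v _ => Nat.mul_le_mul_right (w v) (hcov v)).trans ?_
    rw [sum_count_mul]
    refine (Finset.sum_le_sum fun i _ => sum_le_costNat G w (hc i)).trans ?_
    simp
  have hcard : 0 < #(cliques G) :=
    Finset.card_pos.2 ⟨∅, (hmem ∅).2 (by intro a ha; simp at ha)⟩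
  rw [e1] at e2
  have := Nat.le_of_mul_le_mul_right e2 hpos
  omega

open Classical in
/-- Lowering `w` by one on a clique that meets all maximum-weight stable sets lowers the maximum.
The clique may meet such a set in a vertex of weight `0`, where truncated subtraction changes
nothing; restricting the set to the support of `w` avoids this. -/
lemma costNat_lower_lt {V : Type*} [Fintype V] (G : SimpleGraph V) (w : V → ℕ)
    (hpos : 0 < costNat G w univ) (Q : Finset V)
    (hQ : ∀ O, IsStableSet G O → ∑ v ∈ O, w v = costNat G w univ → ∃ v ∈ Q, v ∈ O) :
    costNat G (fun v => if v ∈ Q then w v - 1 else w v) univ < costNat G w univ := by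
  suffices h : costNat G (fun v => if v ∈ Q then w v - 1 else w v) univ
      ≤ costNat G w univ - 1 by omega
  apply costNat_le
  intro O hO
  apply Nat.le_sub_one_of_lt
  have hle : ∀ v ∈ O, (if v ∈ Q then w v - 1 else w v) ≤ w v := fun v _ => by
    split_ifs <;> omega
  by_cases hmax : ∑ v ∈ O, w v = costNat G w univ
  · obtain ⟨u, huQ, hu⟩ := hQ (O.filter (fun v => w v ≠ 0))
      (fun a ha b hb => hO a (mem_filter.1 ha).1 b (mem_filter.1 hb).1)
      ((Finset.sum_filter_ne_zero O).trans hmax)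
    rw [mem_filter] at hu
    rw [← hmax]
    refine Finset.sum_lt_sum hle ⟨u, hu.1, ?_⟩
    rw [if_pos huQ]
    omega
  · exact (Finset.sum_le_sum hle).trans_lt (lt_of_le_of_ne (sum_le_costNat G w hO) hmax)

open Classical in
lemma exists_dual_le {V : Type*} [Fintype V] (G : SimpleGraph V)
    (hG : IsPerfect G) (w : V → ℕ) :
    ∃ y : Finset V → ℕ,
      (∀ v : V, w v ≤ ∑ Q ∈ (maximalCliques G).filter (fun Q => v ∈ Q), y Q) ∧
      ∑ Q ∈ maximalCliques G, y Q ≤ costNat G w univ := by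
  induction hN : costNat G w univ using Nat.strong_induction_on generalizing w with
  | _ N ih =>
  subst hN
  by_cases hw : ∃ v, w v ≠ 0
  swap
  · push Not at hw
    exact ⟨0, by simp [hw], by simp⟩
  have hpos : 0 < costNat G w univ := by
    obtain ⟨v, hv⟩ := hw
    have := sum_le_costNat G w (O := {v}) (by intro a ha b hb; simp_all)
    rw [sum_singleton] at this
    omega
  obtain ⟨K, hK, hhit⟩ := exists_clique_hitting G hG w hw
  obtain ⟨Q, hQ, hKQ⟩ := exists_maximalClique G hK
  have hlt := costNat_lower_lt G w hpos Q fun O hO h =>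
    let ⟨v, hv, hvO⟩ := hhit O hO h
    ⟨v, hKQ hv, hvO⟩
  obtain ⟨y, hy, hsum⟩ := ih _ hlt _ rfl
  refine ⟨fun R => y R + if R = Q then 1 else 0, fun v => ?_, ?_⟩
  · rw [Finset.sum_add_distrib, Finset.sum_ite_eq']
    have h := hy v
    by_cases hv : v ∈ Q
    · rw [if_pos hv] at h
      rw [if_pos (mem_filter.2 ⟨hQ, hv⟩)]
      omega
    · rw [if_neg hv] at h
      omega
  · rw [Finset.sum_add_distrib, Finset.sum_ite_eq', if_pos hQ]
    omega

open Classical in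
/-- For a finite perfect graph `G` and integer weights `w`, the
linear system with one constraint per *maximal* clique is totally dual
integral: there is an integer-valued dual-feasible `y` on the maximal cliques
whose total value equals the maximum weight of a stable set. -/
theorem maximalClique_system_TDI {V : Type*} [Fintype V] (G : SimpleGraph V)
    (hG : IsPerfect G) (w : V → ℕ) :
    ∃ y : Finset V → ℕ,
      (∀ v : V, w v ≤ ∑ Q ∈ (maximalCliques G).filter (fun Q => v ∈ Q), y Q) ∧
      ∑ Q ∈ maximalCliques G, y Q = costNat G w univ := by
  obtain ⟨y, hy, hsum⟩ := exists_dual_le G hG w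
  obtain ⟨Q, hQ, -⟩ := exists_maximalClique G (K := ∅) (by intro a ha; simp at ha)
  -- Any slack in the total is absorbed by an arbitrary maximal clique.
  refine ⟨fun R => y R + if R = Q then costNat G w univ - ∑ R ∈ maximalCliques G, y R else 0,
    fun v => (hy v).trans (Finset.sum_le_sum fun R _ => Nat.le_add_right _ _), ?_⟩
  rw [Finset.sum_add_distrib, Finset.sum_ite_eq', if_pos hQ]
  omega
end

section
/- Let G be a finite perfect graph with vertex set V, let w : V → ℚ be a nonnegative weight function, and let y be an optimal dual solution, i.e., y is dual-feasible on the maximal cliques of G and ∑_Q y(Q) ≤ ∑_Q y'(Q) for every dual-feasible y'. Then y is a core imputation of the investment management game: ∑_Q y(Q) = cost(V), and money_y(S) ≥ cost(S) for every scenario S ⊆ V. -/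
/-!
Weak duality (a clique meets a stable set in at most one vertex) gives `cost S ≤ money y S` for
every dual-feasible `y`, so the content is the existence of a dual-feasible solution of total
value at most `cost V`. After clearing denominators this is an integral statement, the weighted
form of Lovász's perfect graph theorem, and it has two halves.

* `stable_cover` (replication): if every clique has `x`-weight at most `m`, then `m` stable sets
  cover each vertex `v` at least `x v` times. For `0/1` weights this is perfection of `G`;
  larger weights are reduced one unit at a time by peeling off a suitable stable set.
* `clique_cover`: if every stable set has weight at most `N`, then `N` maximal cliques cover
  each `v` at least `W v` times. By induction on `N` it suffices that some maximal clique meets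
  all stable sets of weight `N + 1`. Otherwise choose for each of the `M` maximal cliques a heavy
  stable set missing it. The sum `x` of their indicators has weight at most `M - 1` on each
  clique, so it is covered by `M - 1` stable sets, whence
  `M * (N + 1) ≤ (M - 1) * (N + 1)`, which is absurd (`exists_clique_meeting`).
-/

open Finset

/-- Some multiset of at most `m` sets satisfying `P`, given by its multiplicity function `c`,
covers every vertex `v` at least `x v` times. -/
def Covered {V : Type*} [Fintype V] (P : Finset V → Prop) (x : V → ℕ) (m : ℕ) : Prop :=
  open Classical in
  ∃ c : Finset V → ℕ, (∀ T, c T ≠ 0 → P T) ∧ ∑ T, c T ≤ m ∧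
    ∀ v, x v ≤ ∑ T, if v ∈ T then c T else 0

section
open Classical

variable {V : Type*} {G : SimpleGraph V}

lemma IsCliqueF.card_inter_le {K T : Finset V} (hK : IsCliqueF G K) (hT : IsStableSet G T) :
    #(T ∩ K) ≤ 1 := by
  rw [card_le_one]
  intro a ha b hb
  rw [mem_inter] at ha hb
  by_contra hab
  exact hT a ha.1 b hb.1 (hK a ha.2 b hb.2 hab)

lemma IsCliqueF.mono {K L : Finset V} (hK : IsCliqueF G K) (h : L ⊆ K) : IsCliqueF G L :=
  fun u hu v hv => hK u (h hu) v (h hv)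

lemma IsStableSet.mono {K L : Finset V} (hK : IsStableSet G K) (h : L ⊆ K) : IsStableSet G L :=
  fun u hu v hv => hK u (h hu) v (h hv)

variable [Fintype V]

lemma Covered.add {P : Finset V → Prop} {x x' : V → ℕ} {m : ℕ} {T : Finset V}
    (h : Covered P x m) (hT : P T) (hx : ∀ v, x' v ≤ x v + if v ∈ T then 1 else 0) :
    Covered P x' (m + 1) := by
  obtain ⟨c, hc, hm, hv⟩ := h
  refine ⟨fun U => c U + if U = T then 1 else 0, ?_, ?_, ?_⟩
  · intro U hU
    by_cases h : U = T
    · exact h ▸ hT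
    · exact hc U (by simpa [h] using hU)
  · rw [sum_add_distrib]
    simpa using hm
  · intro v
    refine (hx v).trans ((Nat.add_le_add_right (hv v) _).trans (le_of_eq ?_))
    have : ∀ U : Finset V, (if v ∈ U then c U + (if U = T then 1 else 0) else 0)
        = (if v ∈ U then c U else 0) + (if U = T then (if v ∈ T then 1 else 0) else 0) := by
      intro U
      by_cases h : U = T
      · subst h; by_cases h' : v ∈ U <;> simp [h']
      · simp [h]
    rw [sum_congr rfl (fun U _ => this U), sum_add_distrib]
    simp

/-- Double counting of weights over a cover. -/
lemma sum_mul_cover (c : Finset V → ℕ) (f : V → ℕ) :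
    ∑ v, f v * (∑ T, if v ∈ T then c T else 0) = ∑ T, c T * ∑ v ∈ T, f v := by
  simp_rw [mul_sum]
  rw [sum_comm]
  refine sum_congr rfl fun T _ => ?_
  rw [← sum_filter_add_sum_filter_not univ (fun v => v ∈ T)]
  have h1 : ∑ v with v ∉ T, f v * (if v ∈ T then c T else 0) = 0 :=
    sum_eq_zero fun v hv => by simp [(mem_filter.1 hv).2]
  rw [h1, add_zero, filter_mem_eq_inter, univ_inter]
  exact sum_congr rfl fun v hv => by simp [hv, mul_comm]

lemma IsCliqueF.exists_maximal {K : Finset V} (hK : IsCliqueF G K) :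
    ∃ Q ∈ maximalCliques G, K ⊆ Q := by
  obtain ⟨Q, hKQ, hQ⟩ := (Set.toFinite {Q : Finset V | IsCliqueF G Q}).exists_le_maximal hK
  refine ⟨Q, ?_, hKQ⟩
  simp only [maximalCliques, mem_filter, mem_powerset, subset_univ, true_and]
  exact ⟨hQ.1, fun Q' h1 h2 => (hQ.2 h1 h2).antisymm h2⟩

lemma isCliqueF_of_mem {Q : Finset V} (hQ : Q ∈ maximalCliques G) : IsCliqueF G Q :=
  (mem_filter.1 hQ).2.1

/-- For `0/1` weights the cover consists of the colour classes of the support. -/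
lemma stable_cover_of_le_one (hG : IsPerfect G) (x : V → ℕ) (hx : ∀ v, x v ≤ 1) (m : ℕ)
    (hm : ∀ K, IsCliqueF G K → ∑ v ∈ K, x v ≤ m) : Covered (IsStableSet G) x m := by
  set S : Finset V := univ.filter fun v => x v ≠ 0 with hS
  have hω : (G.induce (S : Set V)).cliqueNum ≤ m := by
    obtain ⟨K, hK⟩ := (G.induce (S : Set V)).exists_isNClique_cliqueNum
    rw [← hK.card_eq, ← card_map (Function.Embedding.subtype _)]
    refine le_trans ?_ (hm (K.map (Function.Embedding.subtype _)) ?_)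
    · rw [card_eq_sum_ones]
      refine sum_le_sum fun v hv => ?_
      obtain ⟨a, _, rfl⟩ := mem_map.1 hv
      have := (mem_filter.1 (mem_coe.1 a.2)).2
      exact Nat.one_le_iff_ne_zero.2 this
    · intro u hu v hv huv
      obtain ⟨a, ha, rfl⟩ := mem_map.1 hu
      obtain ⟨b, hb, rfl⟩ := mem_map.1 hv
      exact hK.isClique ha hb (fun h => huv (by rw [h]))
  have hcol : (G.induce (S : Set V)).Colorable m := by
    rw [← SimpleGraph.chromaticNumber_le_iff_colorable, ← hG S]
    exact_mod_cast hω
  obtain ⟨C⟩ := hcol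
  let cls : Fin m → Finset V := fun i => univ.filter fun v => ∃ h : v ∈ (S : Set V), C ⟨v, h⟩ = i
  refine ⟨fun T => #{i | cls i = T}, ?_, ?_, ?_⟩
  · intro T hT
    obtain ⟨i, hi⟩ := card_ne_zero.1 hT
    rw [← (mem_filter.1 hi).2]
    intro u hu v hv huv
    obtain ⟨hu, hu'⟩ := (mem_filter.1 hu).2
    obtain ⟨hv, hv'⟩ := (mem_filter.1 hv).2
    exact C.valid (show (G.induce (S : Set V)).Adj ⟨u, hu⟩ ⟨v, hv⟩ from huv) (hu'.trans hv'.symm)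
  · rw [← card_eq_sum_card_fiberwise (fun i _ => mem_coe.2 (mem_univ (cls i)))]
    simp
  · intro v
    by_cases hv : x v = 0
    · simp [hv]
    have hvS : v ∈ (S : Set V) := by simp [hS, hv]
    have hmem : v ∈ cls (C ⟨v, hvS⟩) := mem_filter.2 ⟨mem_univ _, hvS, rfl⟩
    refine (hx v).trans (le_trans ?_ (single_le_sum (fun _ _ => Nat.zero_le _)
      (mem_univ (cls (C ⟨v, hvS⟩)))))
    rw [if_pos hmem]
    exact card_pos.2 ⟨C ⟨v, hvS⟩, by simp⟩

/-- A stable set occurring in a tight cover of a clique meets that clique within the support. -/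
lemma tight_cover_meets {x : V → ℕ} {c : Finset V → ℕ} {m : ℕ}
    (hc : ∀ T, c T ≠ 0 → IsStableSet G T) (hm : ∑ T, c T ≤ m)
    (hx : ∀ v, x v ≤ ∑ T, if v ∈ T then c T else 0) {K T : Finset V}
    (hK : IsCliqueF G K) (hKm : m ≤ ∑ v ∈ K, x v) (hT : c T ≠ 0) :
    ∃ u ∈ T, u ∈ K ∧ x u ≠ 0 := by
  by_contra! hcon
  set L := K.filter fun u => x u ≠ 0 with hL
  have hLK : ∑ v ∈ L, x v = ∑ v ∈ K, x v := sum_filter_ne_zero K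
  have hLc : IsCliqueF G L := hK.mono (filter_subset _ _)
  have h1 : ∑ v ∈ L, x v ≤ ∑ U, c U * #(U ∩ L) := by
    calc ∑ v ∈ L, x v ≤ ∑ v ∈ L, ∑ U, (if v ∈ U then c U else 0) := sum_le_sum fun v _ => hx v
      _ = ∑ v, (if v ∈ L then 1 else 0) * ∑ U, (if v ∈ U then c U else 0) := by simp
      _ = ∑ U, c U * #(U ∩ L) := by
        rw [sum_mul_cover]; simp
  have h2 : ∑ U, c U * #(U ∩ L) < ∑ U, c U := by
    refine sum_lt_sum (fun U _ => ?_) ⟨T, mem_univ _, ?_⟩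
    · by_cases hU : c U = 0
      · simp [hU]
      · simpa using Nat.mul_le_mul_left (c U) (hLc.card_inter_le (hc U hU))
    · have : T ∩ L = ∅ := by
        ext u
        simp only [mem_inter, hL, mem_filter, notMem_empty, iff_false]
        rintro ⟨h1, h2, h3⟩
        exact h3 (hcon u h1 h2)
      simp [this, Nat.pos_of_ne_zero hT]
  omega

/-- Lovász's replication lemma: in a perfect graph the weighted chromatic number equals the
weighted clique number, for all natural weights. -/
lemma stable_cover (hG : IsPerfect G) (x : V → ℕ) (m : ℕ)
    (hm : ∀ K, IsCliqueF G K → ∑ v ∈ K, x v ≤ m) : Covered (IsStableSet G) x m := by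
  induction hn : ∑ v, x v using Nat.strong_induction_on generalizing x m with
  | _ n ih =>
  by_cases hx1 : ∀ v, x v ≤ 1
  · exact stable_cover_of_le_one hG x hx1 m hm
  push Not at hx1
  obtain ⟨v, hv⟩ := hx1
  have hmv : x v ≤ m := by
    simpa using hm {v} (by intro a ha b hb hab; simp_all)
  obtain ⟨k, rfl⟩ : ∃ k, m = k + 1 := ⟨m - 1, by omega⟩
  -- `x'` lowers the weight of `v` by one; it still charges `v`, so its cover has a set through `v`.
  let x' : V → ℕ := fun u => if u = v then x u - 1 else x u
  have hx'x : ∀ u, x' u ≤ x u := fun u => by simp only [x']; split_ifs <;> omega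
  have hx'v : x' v = x v - 1 := by simp [x']
  have hlt : ∑ u, x' u < ∑ u, x u :=
    sum_lt_sum (fun u _ => hx'x u) ⟨v, mem_univ _, by omega⟩
  obtain ⟨c, hc, hcm, hcx⟩ := ih _ (hn ▸ hlt) x' (k + 1)
    (fun K hK => (sum_le_sum fun u _ => hx'x u).trans (hm K hK)) rfl
  obtain ⟨T, hvT, hT⟩ : ∃ T, v ∈ T ∧ c T ≠ 0 := by
    by_contra! h
    have h0 : ∑ T, (if v ∈ T then c T else 0) = 0 :=
      sum_eq_zero fun T _ => by split_ifs with h'; exacts [h T h', rfl]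
    have := hcx v
    omega
  -- Removing `T \ {v}` from `x'` lowers every clique of weight `k + 1`.
  let x'' : V → ℕ := fun u => if u ∈ T ∧ u ≠ v then x' u - 1 else x' u
  have hx''x' : ∀ u, x'' u ≤ x' u := fun u => by simp only [x'']; split_ifs <;> omega
  have key : ∀ K, IsCliqueF G K → ∑ u ∈ K, x'' u ≤ k := by
    intro K hK
    by_cases hvK : v ∈ K
    · have : ∑ u ∈ K, x' u < ∑ u ∈ K, x u :=
        sum_lt_sum (fun u _ => hx'x u) ⟨v, hvK, by omega⟩
      have h2 := hm K hK
      have h3 : ∑ u ∈ K, x'' u ≤ ∑ u ∈ K, x' u := sum_le_sum fun u _ => hx''x' u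
      omega
    · by_cases hK' : k + 1 ≤ ∑ u ∈ K, x' u
      · obtain ⟨u, huT, huK, hu⟩ := tight_cover_meets hc hcm hcx hK hK' hT
        have huv : u ≠ v := fun h => hvK (h ▸ huK)
        have : ∑ u ∈ K, x'' u < ∑ u ∈ K, x' u :=
          sum_lt_sum (fun u _ => hx''x' u) ⟨u, huK, by
            simp only [x'', if_pos (And.intro huT huv)]; omega⟩
        have h2 := hm K hK
        have h3 : ∑ u ∈ K, x' u ≤ ∑ u ∈ K, x u := sum_le_sum fun u _ => hx'x u
        omega
      · have h3 : ∑ u ∈ K, x'' u ≤ ∑ u ∈ K, x' u := sum_le_sum fun u _ => hx''x' u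
        omega
  have hlt' : ∑ u, x'' u < n :=
    hn ▸ lt_of_le_of_lt (sum_le_sum fun u _ => hx''x' u) hlt
  refine (ih _ hlt' x'' k key rfl).add (hc T hT) fun u => ?_
  by_cases huv : u = v
  · subst huv
    simp [x'', x', hvT]
    omega
  · by_cases huT : u ∈ T
    · simp [x'', x', huT, huv]
      omega
    · simp [x'', x', huT, huv]

/-- If all stable sets have weight at most `N + 1`, some maximal clique meets all those attaining
the bound. -/
lemma exists_clique_meeting (hG : IsPerfect G) (W : V → ℕ) (N : ℕ)
    (hN : ∀ O, IsStableSet G O → ∑ v ∈ O, W v ≤ N + 1) :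
    ∃ Q ∈ maximalCliques G, ∀ O, IsStableSet G O → ∑ v ∈ O, W v = N + 1 → (O ∩ Q).Nonempty := by
  by_contra! hcon
  have hcon' : ∀ Q : Finset V, ∃ O, Q ∈ maximalCliques G →
      IsStableSet G O ∧ ∑ v ∈ O, W v = N + 1 ∧ O ∩ Q = ∅ := by
    intro Q
    by_cases hQ : Q ∈ maximalCliques G
    · obtain ⟨O, h1, h2, h3⟩ := hcon Q hQ
      exact ⟨O, fun _ => ⟨h1, h2, h3⟩⟩
    · exact ⟨∅, fun h => absurd h hQ⟩
  choose S hS using hcon'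
  set M := #(maximalCliques G) with hM
  have hMpos : 0 < M := by
    obtain ⟨Q, hQ, _⟩ := IsCliqueF.exists_maximal (G := G) (K := ∅) (by intro a ha; simp at ha)
    exact card_pos.2 ⟨Q, hQ⟩
  let x : V → ℕ := fun v => ∑ Q ∈ maximalCliques G, if v ∈ S Q then 1 else 0
  have hx : ∀ K, IsCliqueF G K → ∑ v ∈ K, x v ≤ M - 1 := by
    intro K hK
    obtain ⟨Q, hQ, hKQ⟩ := hK.exists_maximal
    have h1 : ∑ v ∈ K, x v = ∑ R ∈ maximalCliques G, #(S R ∩ K) := by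
      simp only [x]
      rw [sum_comm]
      refine sum_congr rfl fun R _ => ?_
      rw [inter_comm]
      simp
    have h2 : ∑ R ∈ maximalCliques G, #(S R ∩ K) < ∑ R ∈ maximalCliques G, 1 := by
      refine sum_lt_sum (fun R hR => hK.card_inter_le (hS R hR).1) ⟨Q, hQ, ?_⟩
      have : S Q ∩ K = ∅ := subset_empty.1 ((hS Q hQ).2.2 ▸ inter_subset_inter_left hKQ)
      simp [this]
    rw [← card_eq_sum_ones] at h2
    omega
  obtain ⟨c, hc, hcm, hcx⟩ := stable_cover hG x (M - 1) hx
  have hlow : ∑ v, W v * x v = M * (N + 1) := by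
    simp only [x, mul_sum]
    rw [sum_comm, hM, ← smul_eq_mul, ← sum_const]
    refine sum_congr rfl fun Q hQ => ?_
    rw [← (hS Q hQ).2.1]
    simp
  have hup : ∑ v, W v * x v ≤ (M - 1) * (N + 1) := by
    calc ∑ v, W v * x v ≤ ∑ v, W v * ∑ T, (if v ∈ T then c T else 0) :=
          sum_le_sum fun v _ => Nat.mul_le_mul_left _ (hcx v)
      _ = ∑ T, c T * ∑ v ∈ T, W v := sum_mul_cover c W
      _ ≤ ∑ T, c T * (N + 1) := by
          refine sum_le_sum fun T _ => ?_
          by_cases hT : c T = 0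
          · simp [hT]
          · exact Nat.mul_le_mul_left _ (hN T (hc T hT))
      _ = (∑ T, c T) * (N + 1) := (sum_mul _ _ _).symm
      _ ≤ (M - 1) * (N + 1) := Nat.mul_le_mul_right _ hcm
  have := Nat.mul_lt_mul_of_pos_right (show M - 1 < M by omega) (Nat.succ_pos N)
  simp only [Nat.succ_eq_add_one] at this
  omega

/-- Dual half of the weighted perfect graph theorem: the maximum weight of a stable set bounds the
number of maximal cliques needed to cover every vertex according to its weight. -/
lemma clique_cover (hG : IsPerfect G) (N : ℕ) (W : V → ℕ)
    (hN : ∀ O, IsStableSet G O → ∑ v ∈ O, W v ≤ N) :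
    Covered (fun Q => Q ∈ maximalCliques G) W N := by
  induction N generalizing W with
  | zero =>
    refine ⟨fun _ => 0, by simp, by simp, fun v => ?_⟩
    have := hN {v} (by intro a ha b hb; simp_all)
    simpa using this
  | succ N ih =>
    obtain ⟨Q, hQ, hmeet⟩ := exists_clique_meeting hG W N hN
    refine (ih (fun v => W v - if v ∈ Q then 1 else 0) ?_).add hQ
      (fun v => by split_ifs <;> omega)
    intro O hO
    have hle : ∑ v ∈ O, (W v - if v ∈ Q then 1 else 0) ≤ ∑ v ∈ O, W v :=
      sum_le_sum fun v _ => Nat.sub_le _ _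
    have hOle := hN O hO
    by_cases hO1 : ∑ v ∈ O, W v = N + 1
    -- Restricting to positive weights makes the truncated subtraction a genuine decrease.
    · obtain ⟨u, hu⟩ := hmeet (O.filter fun v => W v ≠ 0) (hO.mono (filter_subset _ _))
        (by rw [← hO1]; exact sum_filter_ne_zero O)
      simp only [mem_inter, mem_filter] at hu
      have : ∑ v ∈ O, (W v - if v ∈ Q then 1 else 0) < ∑ v ∈ O, W v :=
        sum_lt_sum (fun v _ => Nat.sub_le _ _) ⟨u, hu.1.1, by rw [if_pos hu.2]; omega⟩
      omega
    · omega

lemma exists_common_denominator (w : V → ℚ) (hw : ∀ v, 0 ≤ w v) :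
    ∃ (D : ℕ) (W : V → ℕ), 0 < D ∧ ∀ v, (W v : ℚ) = D * w v := by
  have hD : ∀ v, ∃ n : ℕ, (n : ℚ) = ((∏ u, (w u).den : ℕ) : ℚ) * w v := by
    intro v
    refine ⟨(∏ u ∈ univ.erase v, (w u).den) * (w v).num.toNat, ?_⟩
    rw [← mul_prod_erase univ _ (mem_univ v)]
    have h1 : (((w v).num.toNat : ℕ) : ℚ) = (w v).den * w v := by
      rw [mul_comm, Rat.mul_den_eq_num]
      exact_mod_cast Int.toNat_of_nonneg (Rat.num_nonneg.2 (hw v))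
    rw [Nat.cast_mul, h1, Nat.cast_mul]
    ring
  choose W hW using hD
  exact ⟨∏ u, (w u).den, W, prod_pos fun u _ => (w u).den_pos, hW⟩

lemma weak_duality (w : V → ℚ) (y : Finset V → ℚ)
    (hy0 : ∀ Q ∈ maximalCliques G, 0 ≤ y Q)
    (hyf : ∀ v : V, w v ≤ ∑ Q ∈ (maximalCliques G).filter (fun Q => v ∈ Q), y Q)
    (S : Finset V) : cost G w S ≤ money G y S := by
  refine sup'_le _ _ fun O hO => ?_
  rw [mem_filter, mem_powerset] at hO
  obtain ⟨hOS, hO⟩ := hO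
  calc ∑ v ∈ O, w v
      ≤ ∑ v ∈ O, ∑ Q ∈ (maximalCliques G).filter (fun Q => v ∈ Q), y Q :=
        sum_le_sum fun v _ => hyf v
    _ = ∑ Q ∈ maximalCliques G, (#(O ∩ Q) : ℚ) * y Q := by
        simp_rw [sum_filter]
        rw [sum_comm]
        refine sum_congr rfl fun Q _ => ?_
        rw [← sum_filter, filter_mem_eq_inter, sum_const, nsmul_eq_mul]
    _ ≤ money G y S := by
        rw [money, sum_filter]
        refine sum_le_sum fun Q hQ => ?_
        have h1 := (isCliqueF_of_mem hQ).card_inter_le hO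
        split_ifs with h
        · exact mul_le_of_le_one_left (hy0 Q hQ) (by exact_mod_cast h1)
        · have : O ∩ Q = ∅ := by
            rw [not_nonempty_iff_eq_empty] at h
            exact subset_empty.1 (h ▸ inter_comm S Q ▸ inter_subset_inter_right hOS)
          simp [this]

end

open Classical in
/-- over a perfect graph, every optimal dual solution is a core
imputation of the investment management game. -/
theorem optimal_dual_is_core {V : Type*} [Fintype V] (G : SimpleGraph V)
    (hG : IsPerfect G) (w : V → ℚ) (hw : ∀ v, 0 ≤ w v) (y : Finset V → ℚ)
    (hy0 : ∀ Q ∈ maximalCliques G, 0 ≤ y Q)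
    (hyf : ∀ v : V, w v ≤ ∑ Q ∈ (maximalCliques G).filter (fun Q => v ∈ Q), y Q)
    (hopt : ∀ y' : Finset V → ℚ,
      (∀ Q ∈ maximalCliques G, 0 ≤ y' Q) →
      (∀ v : V, w v ≤ ∑ Q ∈ (maximalCliques G).filter (fun Q => v ∈ Q), y' Q) →
      ∑ Q ∈ maximalCliques G, y Q ≤ ∑ Q ∈ maximalCliques G, y' Q) :
    (∑ Q ∈ maximalCliques G, y Q = cost G w univ) ∧
    (∀ S : Finset V, cost G w S ≤ money G y S) := by
  refine ⟨le_antisymm ?_ ?_, weak_duality w y hy0 hyf⟩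
  -- The integral clique cover of `D * w`, divided by `D`, is dual-feasible of value at most
  -- `cost V`.
  · obtain ⟨D, W, hD, hW⟩ := exists_common_denominator w hw
    have hD' : (0 : ℚ) < D := by exact_mod_cast hD
    obtain ⟨O, hO, hcost⟩ := exists_mem_eq_sup' (s := univ.powerset.filter (IsStableSet G))
      ⟨∅, by simp [IsStableSet]⟩ (fun O => ∑ v ∈ O, w v)
    have hcost : cost G w univ = ∑ v ∈ O, w v := hcost
    have hWw : ∀ U : Finset V, ((∑ v ∈ U, W v : ℕ) : ℚ) = D * ∑ v ∈ U, w v := by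
      intro U
      rw [Nat.cast_sum, mul_sum]
      exact sum_congr rfl fun v _ => hW v
    obtain ⟨c, hc, hcm, hcx⟩ := clique_cover hG (∑ v ∈ O, W v) W (by
      intro U hU
      have h1 : ∑ v ∈ U, w v ≤ cost G w univ :=
        le_sup' (fun O => ∑ v ∈ O, w v) (mem_filter.2 ⟨by simp, hU⟩)
      have h2 : ((∑ v ∈ U, W v : ℕ) : ℚ) ≤ ((∑ v ∈ O, W v : ℕ) : ℚ) := by
        rw [hWw, hWw, ← hcost]
        exact mul_le_mul_of_nonneg_left h1 hD'.le
      exact_mod_cast h2)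
    have h0 : ∀ Q, Q ∉ maximalCliques G → c Q = 0 := fun Q hQ => by
      by_contra h
      exact hQ (hc Q h)
    refine (hopt (fun Q => (c Q : ℚ) / D) (fun Q _ => by positivity) ?_).trans ?_
    · intro v
      rw [← sum_div, le_div_iff₀ hD', mul_comm, ← hW v, ← Nat.cast_sum, Nat.cast_le]
      refine (hcx v).trans (le_of_eq ?_)
      rw [sum_filter]
      refine (sum_subset (subset_univ _) fun Q _ hQ => ?_).symm
      simp [h0 Q hQ]
    · rw [← sum_div, div_le_iff₀ hD', mul_comm, hcost, ← hWw O, ← Nat.cast_sum, Nat.cast_le]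
      exact (sum_le_sum_of_subset (subset_univ _)).trans hcm
  · exact (weak_duality w y hy0 hyf univ).trans
      (sum_le_sum_of_subset_of_nonneg (filter_subset _ _) fun Q hQ _ => hy0 Q hQ)
end

section
/- Let G be a finite perfect graph with vertex set V, let w : V → ℚ be a nonnegative weight function, and let y be a core imputation of the investment management game. Then y is an optimal dual solution: y is dual-feasible on the maximal cliques of G (∑_{Q ∋ v} y(Q) ≥ w(v) for every vertex v), and ∑_Q y(Q) ≤ ∑_Q y'(Q) for every dual-feasible y'. -/
/-!
Feasibility is the core inequality on singletons: `cost {v} ≥ w v`, and the maximal cliques meeting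
`{v}` are those containing `v`. Optimality is weak LP duality: a stable set meets every clique in at
most one vertex, so any dual-feasible `y'` has total at least the weight of every stable set
(`stable_weight_le_dual`), hence at least `cost V`, which is the total of `y`.
-/

open Finset

/-- Weak duality between stable sets and fractional clique covers. -/
theorem stable_weight_le_dual {V : Type*} [Fintype V] [DecidableEq V] (G : SimpleGraph V)
    (w : V → ℚ) (z : Finset V → ℚ) (hz0 : ∀ Q ∈ maximalCliques G, 0 ≤ z Q)
    (hz : ∀ v : V, w v ≤ ∑ Q ∈ (maximalCliques G).filter (fun Q => v ∈ Q), z Q)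
    (O : Finset V) (hO : IsStableSet G O) :
    ∑ v ∈ O, w v ≤ ∑ Q ∈ maximalCliques G, z Q := by
  calc ∑ v ∈ O, w v
      ≤ ∑ v ∈ O, ∑ Q ∈ (maximalCliques G).filter (fun Q => v ∈ Q), z Q :=
        Finset.sum_le_sum fun v _ => hz v
    _ = ∑ Q ∈ maximalCliques G, ∑ v ∈ O, if v ∈ Q then z Q else 0 := by
        simp_rw [Finset.sum_filter]
        exact Finset.sum_comm
    _ ≤ ∑ Q ∈ maximalCliques G, z Q := by
        refine Finset.sum_le_sum fun Q hQ => ?_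
        have hclique : IsCliqueF G Q := by
          simp only [maximalCliques, Finset.mem_filter] at hQ
          exact hQ.2.1
        have hcard : (O.filter (fun v => v ∈ Q)).card ≤ 1 := by
          refine Finset.card_le_one.2 fun a ha b hb => ?_
          rw [Finset.mem_filter] at ha hb
          by_contra hab
          exact hO a ha.1 b hb.1 (hclique a ha.2 b hb.2 hab)
        rw [← Finset.sum_filter, Finset.sum_const, nsmul_eq_mul]
        exact mul_le_of_le_one_left (hz0 Q hQ) (by exact_mod_cast hcard)

open Classical in
/-- over a perfect graph, every core imputation of the investment
management game is an optimal dual solution. -/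
theorem core_is_optimal_dual {V : Type*} [Fintype V] (G : SimpleGraph V)
    (hG : IsPerfect G) (w : V → ℚ) (hw : ∀ v, 0 ≤ w v) (y : Finset V → ℚ)
    (hy0 : ∀ Q ∈ maximalCliques G, 0 ≤ y Q)
    (hsum : ∑ Q ∈ maximalCliques G, y Q = cost G w univ)
    (hcore : ∀ S : Finset V, cost G w S ≤ money G y S) :
    (∀ v : V, w v ≤ ∑ Q ∈ (maximalCliques G).filter (fun Q => v ∈ Q), y Q) ∧
    (∀ y' : Finset V → ℚ,
      (∀ Q ∈ maximalCliques G, 0 ≤ y' Q) →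
      (∀ v : V, w v ≤ ∑ Q ∈ (maximalCliques G).filter (fun Q => v ∈ Q), y' Q) →
      ∑ Q ∈ maximalCliques G, y Q ≤ ∑ Q ∈ maximalCliques G, y' Q) := by
  refine ⟨fun v => ?_, fun y' hy'0 hy' => ?_⟩
  · have hcost : w v ≤ cost G w {v} := by
      have h := Finset.le_sup' (s := (({v} : Finset V).powerset.filter (IsStableSet G)))
        (fun O => ∑ u ∈ O, w u) (b := {v}) (by simp [IsStableSet])
      simpa [cost] using h
    have hmoney : money G y {v} = ∑ Q ∈ (maximalCliques G).filter (fun Q => v ∈ Q), y Q := by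
      unfold money
      congr 1
      ext Q
      simp [Finset.Nonempty]
    exact hmoney ▸ hcost.trans (hcore {v})
  · rw [hsum]
    refine Finset.sup'_le _ _ fun O hO => ?_
    exact stable_weight_le_dual G w y' hy'0 hy' O (Finset.mem_filter.1 hO).2
end

section
/- Let G be a finite simple graph with vertex set V, let w : V → ℚ be a nonnegative weight function, let y be a dual-feasible function on the maximal cliques of G, and let S ⊆ V. Define z on the cliques of the induced subgraph G[S] by z(Q') := ∑ y(Q), the sum over maximal cliques Q of G with Q ∩ S = Q'. Then z is dual-feasible for G[S], i.e., ∑_{Q' ∋ v} z(Q') ≥ w(v) for every v ∈ S (Q' ranging over cliques of G[S]), and ∑_{Q'} z(Q') = ∑_{Q : Q ∩ S ≠ ∅} y(Q) = money_y(S). -/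
/-!
Every maximal clique `Q` of `G` contributes `y Q` to exactly one value of `z`, namely `z (Q ∩ S)`.
Hence the sum of `z` over any family `T` of sets is the sum of `y` over the maximal cliques `Q`
with `Q ∩ S ∈ T` (`sum_projected`). If `Q` is a clique meeting `S`, then `Q ∩ S` is a nonempty
clique of `G[S]` (`inter_mem_cliquesIn_iff`). Taking for `T` the cliques of `G[S]` through `v ∈ S`
turns the covering sum of `z` at `v` into that of `y` at `v`; taking all cliques of `G[S]` gives
`money G y S`.
-/

open Finset

open Classical in
/-- The nonempty cliques of the induced subgraph `G[S]`, viewed as the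
nonempty cliques of `G` contained in `S`. -/
noncomputable def cliquesIn {V : Type*} (G : SimpleGraph V) [Fintype V]
    (S : Finset V) : Finset (Finset V) :=
  univ.powerset.filter (fun Q => IsCliqueF G Q ∧ Q ⊆ S ∧ Q.Nonempty)

/-- Double counting along the fibres of `Q ↦ Q ∩ S`. -/
lemma sum_projected {V : Type*} [DecidableEq V] (M T : Finset (Finset V)) (y : Finset V → ℚ)
    (S : Finset V) :
    ∑ Q' ∈ T, ∑ Q ∈ M.filter (fun Q => Q ∩ S = Q'), y Q
      = ∑ Q ∈ M.filter (fun Q => Q ∩ S ∈ T), y Q := by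
  simp_rw [Finset.sum_filter]
  rw [Finset.sum_comm]
  simp

lemma inter_mem_cliquesIn_iff {V : Type*} [Fintype V] [DecidableEq V] {G : SimpleGraph V}
    {Q : Finset V} (hQ : Q ∈ maximalCliques G) (S : Finset V) :
    Q ∩ S ∈ cliquesIn G S ↔ (Q ∩ S).Nonempty := by
  have hclique : IsCliqueF G Q := by
    simp only [maximalCliques, mem_filter] at hQ
    exact hQ.2.1
  simp only [cliquesIn, mem_filter, powerset_univ, mem_univ, true_and]
  refine ⟨fun h => h.2.2, fun h => ⟨?_, inter_subset_right, h⟩⟩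
  exact fun u hu v hv => hclique u (mem_inter.1 hu).1 v (mem_inter.1 hv).1

/-- projecting a dual-feasible `y` on the maximal cliques of `G`
to the cliques of the induced subgraph `G[S]` (by `z Q' = ∑` of `y Q` over the
maximal cliques `Q` with `Q ∩ S = Q'`) yields a dual-feasible solution for
`G[S]` of total value `money y S`. -/
theorem projected_dual_feasible {V : Type*} [Fintype V] [DecidableEq V]
    (G : SimpleGraph V) (w : V → ℚ) (hw : ∀ v, 0 ≤ w v) (y : Finset V → ℚ)
    (hy0 : ∀ Q ∈ maximalCliques G, 0 ≤ y Q)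
    (hyf : ∀ v : V, w v ≤ ∑ Q ∈ (maximalCliques G).filter (fun Q => v ∈ Q), y Q)
    (S : Finset V) (z : Finset V → ℚ)
    (hz : ∀ Q' : Finset V,
      z Q' = ∑ Q ∈ (maximalCliques G).filter (fun Q => Q ∩ S = Q'), y Q) :
    (∀ v ∈ S, w v ≤ ∑ Q' ∈ (cliquesIn G S).filter (fun Q' => v ∈ Q'), z Q') ∧
    (∑ Q' ∈ cliquesIn G S, z Q' = money G y S) := by
  simp_rw [hz]
  refine ⟨fun v hv => (hyf v).trans_eq ?_, ?_⟩
  · rw [sum_projected]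
    refine Finset.sum_congr (Finset.filter_congr fun Q hQ => ?_) fun _ _ => rfl
    rw [mem_filter, inter_mem_cliquesIn_iff hQ, mem_inter]
    exact ⟨fun h => ⟨⟨v, mem_inter.2 ⟨h, hv⟩⟩, h, hv⟩, fun h => h.2.1⟩
  · rw [sum_projected, money]
    refine Finset.sum_congr ?_ fun _ _ => rfl
    -- `money` intersects with the classical `DecidableEq` instance.
    ext Q
    simp only [mem_filter]
    refine and_congr_right fun hQ => ?_
    rw [inter_mem_cliquesIn_iff hQ]
    simp only [Finset.Nonempty, mem_inter]
end

section
/- Let G be a finite perfect graph with vertex set V. Then for every S ⊆ V, the maximum size of a stable set of G contained in S equals the minimum number of cliques of G whose union contains S. -/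
/-!
The equality is the weak perfect graph theorem (Lovász), in its min-max form.

A stable set meets each clique in at most one vertex, so a clique cover of `S` has at least as many
members as any stable subset of `S`. The converse rests on two facts.

* `exists_weighted_coloring`: a perfect graph is also perfect for vertex weights `w : V → ℕ`. If
  every clique has weight at most `k`, then there are `k` stable sets such that each vertex `v`
  lies in exactly `w v` of them. This is the replication lemma, stated without replicating
  vertices.
* `exists_clique_meeting`: if the stable subsets of `S` have at most `n + 1` vertices, then some
  clique meets all those with exactly `n + 1` vertices. Otherwise choose for each of the `N`
  cliques `K` a stable set `A K ⊆ S` of size `n + 1` avoiding `K`, and let `w v` be the number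
  of sets `A K` that contain `v`. A clique has weight at most `N - 1`, so the total weight
  `N * (n + 1)` is covered by `N - 1` stable subsets of `S` of size at most `n + 1`, which is
  impossible.

Removing such a clique from `S` lowers the stability number, and induction yields the cover.
-/

open Finset

theorem card_clique_inter_stable_le_one {V : Type*} [DecidableEq V] {G : SimpleGraph V}
    {K A : Finset V} (hK : IsCliqueF G K) (hA : IsStableSet G A) : (K ∩ A).card ≤ 1 := by
  refine Finset.card_le_one.2 fun a ha b hb => ?_
  rw [Finset.mem_inter] at ha hb
  by_contra hab
  exact hA a ha.2 b hb.2 (hK a ha.1 b hb.1 hab)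

/-- Double counting of the pairs `(v, i)` with `v ∈ K ∩ A i`. -/
theorem sum_card_filter_mem {V ι : Type*} [DecidableEq V] (s : Finset ι) (K : Finset V)
    (A : ι → Finset V) :
    ∑ v ∈ K, (s.filter (fun i => v ∈ A i)).card = ∑ i ∈ s, (K ∩ A i).card := by
  simp only [Finset.card_filter]
  rw [Finset.sum_comm]
  refine Finset.sum_congr rfl fun i _ => ?_
  rw [← Finset.card_filter, Finset.filter_mem_eq_inter]

/-- The definition of perfection, read as: if all cliques inside `S` have size at most `k`, then
`S` is partitioned into `k` (possibly empty) stable sets. -/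
theorem exists_coloring {V : Type*} [Fintype V] [DecidableEq V] {G : SimpleGraph V}
    (hG : IsPerfect G) (S : Finset V) (k : ℕ)
    (h : ∀ K, IsCliqueF G K → K ⊆ S → K.card ≤ k) :
    ∃ A : Fin k → Finset V, (∀ i, IsStableSet G (A i)) ∧
      ∀ v, (univ.filter (fun i => v ∈ A i)).card = if v ∈ S then 1 else 0 := by
  classical
  have hnum : (G.induce (S : Set V)).cliqueNum ≤ k := by
    obtain ⟨s, hs⟩ := (G.induce (S : Set V)).exists_isNClique_cliqueNum
    rw [← hs.card_eq, ← Finset.card_map (Function.Embedding.subtype _)]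
    apply h
    · intro u hu v hv huv
      simp only [Finset.mem_map, Function.Embedding.subtype_apply] at hu hv
      obtain ⟨u, hu, rfl⟩ := hu
      obtain ⟨v, hv, rfl⟩ := hv
      exact hs.isClique hu hv (fun e => huv (by rw [e]))
    · intro u hu
      simp only [Finset.mem_map, Function.Embedding.subtype_apply] at hu
      obtain ⟨u, _, rfl⟩ := hu
      exact u.2
  have hcol : (G.induce (S : Set V)).Colorable k := by
    rw [← SimpleGraph.chromaticNumber_le_iff_colorable, ← hG S]
    exact_mod_cast hnum
  obtain ⟨c⟩ := hcol
  refine ⟨fun i => univ.filter (fun v => ∃ hv : v ∈ S, c ⟨v, hv⟩ = i), ?_, ?_⟩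
  · intro i u hu v hv huv
    simp only [Finset.mem_filter, Finset.mem_univ, true_and] at hu hv
    obtain ⟨hu, hcu⟩ := hu
    obtain ⟨hv, hcv⟩ := hv
    have hadj : (G.induce (S : Set V)).Adj ⟨u, hu⟩ ⟨v, hv⟩ := huv
    exact c.valid hadj (hcu.trans hcv.symm)
  · intro v
    by_cases hv : v ∈ S
    · simp [hv, Finset.filter_eq]
    · simp [hv]

/-- The weighted form of perfection: if every clique has weight at most `k`, then `k` stable sets
cover each vertex `v` exactly `w v` times. -/
theorem exists_weighted_coloring {V : Type*} [Fintype V] [DecidableEq V] {G : SimpleGraph V}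
    (hG : IsPerfect G) (m : ℕ) : ∀ (w : V → ℕ) (k : ℕ), ∑ v, w v ≤ m →
    (∀ K, IsCliqueF G K → ∑ v ∈ K, w v ≤ k) →
    ∃ A : Fin k → Finset V, (∀ i, IsStableSet G (A i)) ∧
      ∀ v, (univ.filter (fun i => v ∈ A i)).card = w v := by
  induction m with
  | zero =>
    intro w k hm _
    refine ⟨fun _ => ∅, fun i u hu => by simp at hu, fun v => ?_⟩
    have : w v ≤ ∑ v, w v := Finset.single_le_sum (fun _ _ => Nat.zero_le _) (Finset.mem_univ v)
    simp
    omega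
  | succ m ih =>
    intro w k hm hk
    by_cases hle : ∀ v, w v ≤ 1
    -- A weight with values in `{0, 1}` is the indicator function of its support.
    · have hw : ∀ v, w v = if v ∈ univ.filter (fun v => w v = 1) then 1 else 0 := by
        intro v
        have := hle v
        simp only [Finset.mem_filter, Finset.mem_univ, true_and]
        split_ifs <;> omega
      obtain ⟨A, hA, hAw⟩ := exists_coloring hG (univ.filter (fun v => w v = 1)) k (by
        intro K hK hKS
        refine le_trans (le_of_eq ?_) (hk K hK)
        rw [Finset.card_eq_sum_ones]
        refine Finset.sum_congr rfl fun v hv => ?_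
        have := hKS hv
        simp only [Finset.mem_filter, Finset.mem_univ, true_and] at this
        exact this.symm)
      exact ⟨A, hA, fun v => (hAw v).trans (hw v).symm⟩
    · push Not at hle
      obtain ⟨x, hx⟩ := hle
      -- Lower the weight of `x` by one, and take a colour class `A i` through `x`.
      set w' : V → ℕ := fun v => if v = x then w v - 1 else w v with hw'
      have hle' : ∀ v, w' v ≤ w v := by
        intro v; simp only [hw']; split_ifs <;> omega
      have hlt' : ∑ v, w' v < ∑ v, w v :=
        Finset.sum_lt_sum (fun v _ => hle' v) ⟨x, Finset.mem_univ _, by simp [hw']; omega⟩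
      obtain ⟨A, hA, hAw⟩ := ih w' k (by omega)
        (fun K hK => (Finset.sum_le_sum fun v _ => hle' v).trans (hk K hK))
      have hxi : ∃ i, x ∈ A i := by
        have h1 : 0 < (univ.filter (fun i => x ∈ A i)).card := by
          rw [hAw]; simp [hw']; omega
        obtain ⟨i, hi⟩ := Finset.card_pos.1 h1
        exact ⟨i, by simpa using hi⟩
      obtain ⟨i, hxi⟩ := hxi
      obtain ⟨k, rfl⟩ : ∃ l, k = l + 1 := ⟨k - 1, by have := i.2; omega⟩
      -- What remains of `w` to be coloured when `A i` itself is used as one of the stable sets.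
      set w'' : V → ℕ := fun v => w v - if v ∈ A i then 1 else 0 with hw''
      have hpos : ∀ v ∈ A i, 1 ≤ w' v := by
        intro v hv
        rw [← hAw v]
        exact Finset.card_pos.2 ⟨i, by simpa using hv⟩
      have hadd : ∀ v, w'' v + (if v ∈ A i then 1 else 0) = w v := by
        intro v
        simp only [hw'']
        split_ifs with hv
        · have := hpos v hv
          have := hle' v
          omega
        · omega
      have hle'' : ∀ v, w'' v ≤ w' v := by
        intro v
        by_cases hvx : v = x
        · subst hvx; simp [hw', hw'', hxi]
        · simp [hw', hw'', hvx]
      have hk'' : ∀ K, IsCliqueF G K → ∑ v ∈ K, w'' v ≤ k := by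
        intro K hK
        have hsum : ∑ v ∈ K, w'' v + (K ∩ A i).card = ∑ v ∈ K, w v := by
          rw [← Finset.filter_mem_eq_inter, Finset.card_filter, ← Finset.sum_add_distrib]
          exact Finset.sum_congr rfl fun v _ => hadd v
        have hKk := hk K hK
        by_cases hne : (K ∩ A i).card = 0
        -- A clique missing one of the `k + 1` colour classes has weight at most `k` for the
        -- lowered weight, which dominates the remaining one.
        · have hcount : ∑ v ∈ K, w' v = ∑ j, (K ∩ A j).card := by
            rw [← sum_card_filter_mem]
            exact Finset.sum_congr rfl fun v _ => (hAw v).symm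
          have hlt : ∑ j, (K ∩ A j).card < ∑ _j : Fin (k + 1), 1 :=
            Finset.sum_lt_sum (fun j _ => card_clique_inter_stable_le_one hK (hA j))
              ⟨i, Finset.mem_univ _, by omega⟩
          have := Finset.sum_le_sum (s := K) fun v _ => hle'' v
          simp at hlt
          omega
        · omega
      obtain ⟨B, hB, hBw⟩ := ih w'' k
        (by have := Finset.sum_le_sum (s := univ) fun v _ => hle'' v; omega) hk''
      refine ⟨Fin.cons (A i) B, ?_, ?_⟩
      · intro j
        refine Fin.cases ?_ (fun j => ?_) j
        · simpa using hA i
        · simpa using hB j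
      · intro v
        rw [← hadd v, ← hBw v, Finset.card_filter, Fin.sum_univ_succ, Finset.card_filter]
        simp [add_comm]

/-- The heart of the argument: some clique meets every stable subset of `S` of the largest
permitted size `n + 1`. -/
theorem exists_clique_meeting_s9 {V : Type*} [Fintype V] [DecidableEq V] {G : SimpleGraph V}
    (hG : IsPerfect G) (S : Finset V) (n : ℕ)
    (hS : ∀ O, IsStableSet G O → O ⊆ S → O.card ≤ n + 1) :
    ∃ K, IsCliqueF G K ∧ ∀ O, IsStableSet G O → O ⊆ S \ K → O.card ≤ n := by
  classical
  by_contra hcon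
  push Not at hcon
  have hex : ∀ K, ∃ O, IsCliqueF G K → IsStableSet G O ∧ O ⊆ S \ K ∧ n < O.card := by
    intro K
    by_cases hK : IsCliqueF G K
    · obtain ⟨O, h⟩ := hcon K hK
      exact ⟨O, fun _ => h⟩
    · exact ⟨∅, fun h => absurd h hK⟩
  choose A hA using hex
  have hmem : ∀ K, K ∈ cliques G ↔ IsCliqueF G K := by intro K; simp [cliques]
  have hN : 0 < (cliques G).card :=
    Finset.card_pos.2 ⟨∅, (hmem _).2 fun u hu => by simp at hu⟩
  obtain ⟨B, hB, hBw⟩ := exists_weighted_coloring hG _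
    (fun v => ((cliques G).filter (fun K => v ∈ A K)).card) ((cliques G).card - 1) le_rfl (by
      intro K hK
      rw [sum_card_filter_mem]
      have hlt : ∑ K' ∈ cliques G, (K ∩ A K').card < ∑ _K' ∈ cliques G, 1 := by
        refine Finset.sum_lt_sum
          (fun K' hK' => card_clique_inter_stable_le_one hK (hA K' ((hmem _).1 hK')).1)
          ⟨K, (hmem _).2 hK, ?_⟩
        have hdis : K ∩ A K = ∅ := by
          ext v
          simp only [Finset.mem_inter, Finset.notMem_empty, iff_false, not_and]
          intro hv hvA
          exact (Finset.mem_sdiff.1 ((hA K hK).2.1 hvA)).2 hv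
        simp [hdis]
      simp at hlt
      omega)
  have hBS : ∀ i, (B i).card ≤ n + 1 := by
    intro i
    refine hS _ (hB i) fun v hv => ?_
    have hpos : 0 < ((cliques G).filter (fun K => v ∈ A K)).card := by
      rw [← hBw v]
      exact Finset.card_pos.2 ⟨i, by simpa using hv⟩
    obtain ⟨K, hK⟩ := Finset.card_pos.1 hpos
    rw [Finset.mem_filter, hmem] at hK
    exact (Finset.mem_sdiff.1 ((hA K hK.1).2.1 hK.2)).1
  -- Compare the two ways of computing the total weight.
  have htotal : ∑ K ∈ cliques G, (A K).card = ∑ i, (B i).card := by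
    have h1 := sum_card_filter_mem (cliques G) univ A
    have h2 := sum_card_filter_mem univ univ B
    simp only [Finset.univ_inter] at h1 h2
    rw [← h1, ← h2]
    exact Finset.sum_congr rfl fun v _ => (hBw v).symm
  have hlow : (cliques G).card * (n + 1) ≤ ∑ K ∈ cliques G, (A K).card := by
    rw [← smul_eq_mul]
    exact Finset.card_nsmul_le_sum _ _ _ fun K hK => (hA K ((hmem _).1 hK)).2.2
  have hupp : ∑ i, (B i).card ≤ ((cliques G).card - 1) * (n + 1) := by
    have := Finset.sum_le_card_nsmul univ (fun i => (B i).card) (n + 1) fun i _ => hBS i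
    simpa using this
  have hlt : ((cliques G).card - 1) * (n + 1) < (cliques G).card * (n + 1) :=
    Nat.mul_lt_mul_of_pos_right (by omega) (by omega)
  omega

theorem exists_cliqueCover {V : Type*} [Fintype V] [DecidableEq V] {G : SimpleGraph V}
    (hG : IsPerfect G) (n : ℕ) : ∀ S : Finset V,
    (∀ O, IsStableSet G O → O ⊆ S → O.card ≤ n) →
    ∃ C : Finset (Finset V), C.card ≤ n ∧ (∀ Q ∈ C, IsCliqueF G Q) ∧ S ⊆ C.biUnion id := by
  induction n with
  | zero =>
    intro S hS
    refine ⟨∅, by simp, by simp, fun v hv => ?_⟩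
    have := hS {v} (by intro a ha b hb; simp at ha hb; simp [ha, hb]) (by simpa using hv)
    simp at this
  | succ n ih =>
    intro S hS
    obtain ⟨K, hK, hKS⟩ := exists_clique_meeting_s9 hG S n hS
    obtain ⟨C, hCn, hC, hcov⟩ := ih (S \ K) hKS
    refine ⟨insert K C, (Finset.card_insert_le _ _).trans (by omega), ?_, ?_⟩
    · intro Q hQ
      rcases Finset.mem_insert.1 hQ with rfl | hQ
      · exact hK
      · exact hC Q hQ
    · intro v hv
      rw [Finset.biUnion_insert, Finset.mem_union]
      by_cases hvK : v ∈ K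
      · exact Or.inl hvK
      · exact Or.inr (hcov (Finset.mem_sdiff.2 ⟨hv, hvK⟩))

theorem card_stable_le_card_cover {V : Type*} [DecidableEq V] {G : SimpleGraph V}
    {O : Finset V} (hO : IsStableSet G O) {C : Finset (Finset V)}
    (hC : ∀ Q ∈ C, IsCliqueF G Q) (hcov : O ⊆ C.biUnion id) : O.card ≤ C.card := by
  have hsub : O ⊆ C.biUnion (fun Q => Q ∩ O) := by
    intro v hv
    obtain ⟨Q, hQ, hvQ⟩ := Finset.mem_biUnion.1 (hcov hv)
    exact Finset.mem_biUnion.2 ⟨Q, hQ, Finset.mem_inter.2 ⟨hvQ, hv⟩⟩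
  have := Finset.card_biUnion_le_card_mul C (fun Q => Q ∩ O) 1
    fun Q hQ => card_clique_inter_stable_le_one (hC Q hQ) hO
  have := Finset.card_le_card hsub
  omega

open Classical in
/-- in a perfect graph, for every `S ⊆ V`, the maximum size of a
stable set contained in `S` equals the minimum number of cliques whose union
contains `S`. -/
theorem stable_eq_cliqueCover {V : Type*} [Fintype V] [DecidableEq V]
    (G : SimpleGraph V) (hG : IsPerfect G) :
    ∀ S : Finset V,
      (S.powerset.filter (IsStableSet G)).sup (fun O => O.card) =
      sInf {n : ℕ | ∃ C : Finset (Finset V), C.card = n ∧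
        (∀ Q ∈ C, IsCliqueF G Q) ∧ S ⊆ C.biUnion id} := by
  intro S
  obtain ⟨C, hCn, hC, hcov⟩ := exists_cliqueCover hG
    ((S.powerset.filter (IsStableSet G)).sup (fun O => O.card)) S (fun O hO hOS =>
      Finset.le_sup (f := fun O : Finset V => O.card)
        (Finset.mem_filter.2 ⟨Finset.mem_powerset.2 hOS, hO⟩))
  apply le_antisymm
  · refine le_csInf ⟨_, C, rfl, hC, hcov⟩ ?_
    rintro n ⟨D, rfl, hD, hDcov⟩
    refine Finset.sup_le fun O hO => ?_
    rw [Finset.mem_filter, Finset.mem_powerset] at hO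
    exact card_stable_le_card_cover hO.2 hD (hO.1.trans hDcov)
  · refine le_trans (Nat.sInf_le ?_) hCn
    exact ⟨C, rfl, hC, hcov⟩
end

section
/- (Shapley–Shubik, sufficiency) Let G = (U, V, E) be a finite bipartite graph with nonnegative edge weights w : E → ℚ. Suppose (u, v) with u : U → ℚ, v : V → ℚ is an optimal dual solution: u, v are nonnegative, u(i) + v(j) ≥ w(i,j) for every edge (i,j) ∈ E, and ∑_{i ∈ U} u(i) + ∑_{j ∈ V} v(j) ≤ ∑_{i ∈ U} u'(i) + ∑_{j ∈ V} v'(j) for every pair (u', v') satisfying the same constraints. Then (u, v) is a core imputation of the assignment game: ∑_{i ∈ U} u(i) + ∑_{j ∈ V} v(j) = worth(U ∪ V), and for all S_u ⊆ U, S_v ⊆ V, ∑_{i ∈ S_u} u(i) + ∑_{j ∈ S_v} v(j) ≥ worth(S_u ∪ S_v). -/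
/-!
The second half is weak duality: along a matching `M` inside `Su ∪ Sv`, summing `w e ≤ u e.1 + v e.2`
counts every vertex at most once (`matching_weight_le`).

For the first half it remains to find a matching whose weight reaches the dual value, and by
complementary slackness it is enough that it consists of tight edges (`w e = u e.1 + v e.2`) and covers
every vertex with a positive price. No infinitesimal move of `(u, v)` that keeps feasibility can lower
the dual objective (`direction_nonneg`). Applied to indicator-type directions, this yields Hall's
condition for an auxiliary balanced bipartite graph `slackGraph` with sides `U ⊕ V` and `V ⊕ U`. In
it, each vertex has a private dummy partner, available exactly when the price of the vertex is zero,
and any two dummies are adjacent. A perfect matching of this graph restricts to a tight matching of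
the original one that leaves only vertices of price zero unmatched (`exists_tight_matching`).
-/


open Finset

/-- `M` is a matching: pairwise vertex-disjoint edges of a bipartite graph,
whose edges are given as pairs in `U × V`. -/
def IsMatchingF {U V : Type*} (M : Finset (U × V)) : Prop :=
  ∀ e ∈ M, ∀ e' ∈ M, (e.1 = e'.1 ∨ e.2 = e'.2) → e = e'

open Classical in
/-- `worth E w Su Sv` : the maximum weight of a matching of the subgraph of
the bipartite graph `(U, V, E)` induced on `Su ∪ Sv`. -/
noncomputable def worth {U V : Type*} (E : Finset (U × V)) (w : U × V → ℚ)
    (Su : Finset U) (Sv : Finset V) : ℚ :=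
  ((E.powerset.filter
      (fun M => IsMatchingF M ∧ ∀ e ∈ M, e.1 ∈ Su ∧ e.2 ∈ Sv)).sup'
    ⟨∅, by simp [IsMatchingF]⟩ (fun M => ∑ e ∈ M, w e))

open Filter Topology in
lemma eventually_nonneg_add_mul (c d : ℚ) (hc : 0 ≤ c) (hd : c = 0 → 0 ≤ d) :
    ∀ᶠ ε : ℚ in 𝓝[>] 0, 0 ≤ c + ε * d := by
  rcases hc.eq_or_lt with h | h
  · filter_upwards [self_mem_nhdsWithin] with ε hε
    have h1 := hd h.symm
    have h2 : (0 : ℚ) < ε := hε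
    rw [← h, zero_add]
    positivity
  · have hcont : Continuous fun ε : ℚ => c + ε * d := by fun_prop
    have h1 : ∀ᶠ ε : ℚ in 𝓝 0, 0 < c + ε * d :=
      hcont.continuousAt.eventually (lt_mem_nhds (by simpa using h))
    exact (h1.filter_mono nhdsWithin_le_nhds).mono fun ε hε => hε.le

open Filter Topology in
/-- First-order optimality: a direction `(d, d')` along which an optimal dual solution stays feasible
for a small positive step cannot decrease the dual objective. -/
lemma direction_nonneg {U V : Type*} [Fintype U] [Fintype V]
    (E : Finset (U × V)) (w : U × V → ℚ)
    (u : U → ℚ) (v : V → ℚ) (hu : ∀ i, 0 ≤ u i) (hv : ∀ j, 0 ≤ v j)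
    (hfeas : ∀ e ∈ E, w e ≤ u e.1 + v e.2)
    (hopt : ∀ u' : U → ℚ, ∀ v' : V → ℚ, (∀ i, 0 ≤ u' i) → (∀ j, 0 ≤ v' j) →
      (∀ e ∈ E, w e ≤ u' e.1 + v' e.2) →
      (∑ i : U, u i) + (∑ j : V, v j) ≤ (∑ i : U, u' i) + (∑ j : V, v' j))
    (d : U → ℚ) (d' : V → ℚ) (hd : ∀ i, u i = 0 → 0 ≤ d i) (hd' : ∀ j, v j = 0 → 0 ≤ d' j)
    (ht : ∀ e ∈ E, w e = u e.1 + v e.2 → 0 ≤ d e.1 + d' e.2) :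
    0 ≤ (∑ i, d i) + ∑ j, d' j := by
  have h1 : ∀ᶠ ε : ℚ in 𝓝[>] 0, ∀ i, 0 ≤ u i + ε * d i :=
    eventually_all.2 fun i => eventually_nonneg_add_mul _ _ (hu i) (hd i)
  have h2 : ∀ᶠ ε : ℚ in 𝓝[>] 0, ∀ j, 0 ≤ v j + ε * d' j :=
    eventually_all.2 fun j => eventually_nonneg_add_mul _ _ (hv j) (hd' j)
  have h3 : ∀ᶠ ε : ℚ in 𝓝[>] 0, ∀ e ∈ E, 0 ≤ (u e.1 + v e.2 - w e) + ε * (d e.1 + d' e.2) :=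
    (eventually_all_finset E).2 fun e he =>
      eventually_nonneg_add_mul _ _ (sub_nonneg.2 (hfeas e he))
        fun h => ht e he (by linarith)
  have h4 : ∀ᶠ ε : ℚ in 𝓝[>] 0, 0 < ε := self_mem_nhdsWithin
  obtain ⟨ε, h1, h2, h3, h4⟩ := (h1.and (h2.and (h3.and h4))).exists
  have h := hopt (fun i => u i + ε * d i) (fun j => v j + ε * d' j) h1 h2
    fun e he => by linarith [h3 e he]
  simp only [sum_add_distrib, ← mul_sum] at h
  have h5 : 0 ≤ ε * ((∑ i, d i) + ∑ j, d' j) := by linarith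
  exact nonneg_of_mul_nonneg_right h5 h4

/-- Weak duality on the vertex set `Su ∪ Sv`. -/
lemma matching_weight_le {U V : Type*} (M : Finset (U × V)) (hM : IsMatchingF M)
    (w : U × V → ℚ) (u : U → ℚ) (v : V → ℚ) (hu : ∀ i, 0 ≤ u i) (hv : ∀ j, 0 ≤ v j)
    (hfeas : ∀ e ∈ M, w e ≤ u e.1 + v e.2) (Su : Finset U) (Sv : Finset V)
    (hS : ∀ e ∈ M, e.1 ∈ Su ∧ e.2 ∈ Sv) :
    ∑ e ∈ M, w e ≤ (∑ i ∈ Su, u i) + ∑ j ∈ Sv, v j := by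
  classical
  have h1 : ∑ e ∈ M, u e.1 ≤ ∑ i ∈ Su, u i := by
    rw [← sum_image (f := u) (g := Prod.fst) fun e he e' he' h => hM e he e' he' (Or.inl h)]
    exact sum_le_sum_of_subset_of_nonneg (image_subset_iff.2 fun e he => (hS e he).1)
      fun i _ _ => hu i
  have h2 : ∑ e ∈ M, v e.2 ≤ ∑ j ∈ Sv, v j := by
    rw [← sum_image (f := v) (g := Prod.snd) fun e he e' he' h => hM e he e' he' (Or.inr h)]
    exact sum_le_sum_of_subset_of_nonneg (image_subset_iff.2 fun e he => (hS e he).2)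
      fun j _ _ => hv j
  have h3 := sum_le_sum hfeas
  rw [sum_add_distrib] at h3
  linarith

/-- Adjacency of the auxiliary graph: on the left, `inl i` is the vertex `i : U` and `inr j` the dummy
partner of `j : V`; on the right, `inl j` is the vertex `j : V` and `inr i` the dummy partner of
`i : U`. -/
def slackGraph {U V : Type*} (E : Finset (U × V)) (w : U × V → ℚ) (u : U → ℚ) (v : V → ℚ) :
    U ⊕ V → V ⊕ U → Prop
  | .inl i, .inl j => (i, j) ∈ E ∧ w (i, j) = u i + v j
  | .inl i, .inr i' => i = i' ∧ u i = 0
  | .inr j, .inl j' => j = j' ∧ v j = 0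
  | .inr _, .inr _ => True

/-- An optimal dual solution admits a matching of tight edges which covers every vertex with a
positive price. -/
lemma exists_tight_matching {U V : Type*} [Fintype U] [Fintype V]
    (E : Finset (U × V)) (w : U × V → ℚ)
    (u : U → ℚ) (v : V → ℚ) (hu : ∀ i, 0 ≤ u i) (hv : ∀ j, 0 ≤ v j)
    (hfeas : ∀ e ∈ E, w e ≤ u e.1 + v e.2)
    (hopt : ∀ u' : U → ℚ, ∀ v' : V → ℚ, (∀ i, 0 ≤ u' i) → (∀ j, 0 ≤ v' j) →
      (∀ e ∈ E, w e ≤ u' e.1 + v' e.2) →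
      (∑ i : U, u i) + (∑ j : V, v j) ≤ (∑ i : U, u' i) + (∑ j : V, v' j)) :
    ∃ M ⊆ E, IsMatchingF M ∧ (∀ e ∈ M, w e = u e.1 + v e.2) ∧
      (∀ i, u i ≠ 0 → ∃ e ∈ M, e.1 = i) ∧ (∀ j, v j ≠ 0 → ∃ e ∈ M, e.2 = j) := by
  classical
  have hall : ∀ S : Finset (U ⊕ V), #S ≤ #{b | ∃ a ∈ S, slackGraph E w u v a b} := by
    intro S
    set A : Finset U := S.toLeft with hA
    set B : Finset V := S.toRight with hB
    set N : Finset (V ⊕ U) := {b | ∃ a ∈ S, slackGraph E w u v a b} with hN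
    set W : Finset V := N.toLeft with hW
    have hcS : #S = #A + #B := card_toLeft_add_card_toRight.symm
    have hcN : #N = #W + #N.toRight := card_toLeft_add_card_toRight.symm
    have hWt : ∀ i ∈ A, ∀ j, (i, j) ∈ E → w (i, j) = u i + v j → j ∈ W := by
      intro i hi j hij ht
      simp only [hW, hN, mem_toLeft, mem_filter, mem_univ, true_and]
      exact ⟨.inl i, by simpa [hA] using hi, hij, ht⟩
    have hWB : ∀ j ∈ B, v j = 0 → j ∈ W := by
      intro j hj h0
      simp only [hW, hN, mem_toLeft, mem_filter, mem_univ, true_and]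
      exact ⟨.inr j, by simpa [hB] using hj, rfl, h0⟩
    rcases B.eq_empty_or_nonempty with hBe | ⟨j₀, hj₀⟩
    · -- Lowering the positive prices in `A` and raising prices in `W` bounds `#W` from below.
      have hR : A.filter (fun i => u i = 0) ⊆ N.toRight := by
        intro i hi
        rw [mem_filter] at hi
        simp only [hN, mem_toRight, mem_filter, mem_univ, true_and]
        exact ⟨.inl i, by simpa [hA] using hi.1, rfl, hi.2⟩
      have key := direction_nonneg E w u v hu hv hfeas hopt
        (fun i => if i ∈ A.filter (fun i => ¬ u i = 0) then -1 else 0)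
        (fun j => if j ∈ W then 1 else 0)
        (by intro i hi; simp [hi]) (by intro j _; split_ifs <;> norm_num)
        (by
          rintro ⟨i, j⟩ he ht
          dsimp only at ht ⊢
          by_cases hi : i ∈ A
          · rw [if_pos (hWt i hi j he ht)]
            split_ifs <;> norm_num
          · simp only [mem_filter, hi, false_and, if_false]
            split_ifs <;> norm_num)
      rw [sum_ite_mem, sum_ite_mem, univ_inter, univ_inter] at key
      simp only [sum_const, smul_neg, nsmul_eq_mul, mul_one] at key
      have key' : #(A.filter (fun i => ¬ u i = 0)) ≤ #W := by
        have : (#(A.filter (fun i => ¬ u i = 0)) : ℚ) ≤ #W := by linarith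
        exact_mod_cast this
      have h1 := card_filter_add_card_filter_not (s := A) (fun i => u i = 0)
      have h2 := card_le_card hR
      have h3 : #B = 0 := by simp [hBe]
      omega
    · -- A dummy in `S` sees all dummies on the right. Prices in `B \ W` are positive, and their tight
      -- edges end outside `A`, so these prices can be lowered while those outside `A` are raised.
      have hR : N.toRight = univ := by
        refine eq_univ_iff_forall.2 fun i => ?_
        simp only [hN, mem_toRight, mem_filter, mem_univ, true_and]
        exact ⟨.inr j₀, by simpa [hB] using hj₀, trivial⟩
      have key := direction_nonneg E w u v hu hv hfeas hopt
        (fun i => if i ∈ Aᶜ then 1 else 0)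
        (fun j => if j ∈ B \ W then -1 else 0)
        (by intro i _; split_ifs <;> norm_num)
        (by
          intro j hj
          rw [if_neg]
          intro h
          rw [mem_sdiff] at h
          exact h.2 (hWB j h.1 hj))
        (by
          rintro ⟨i, j⟩ he ht
          dsimp only at ht ⊢
          by_cases hi : i ∈ A
          · have := hWt i hi j he ht
            simp [hi, this]
          · rw [if_pos (mem_compl.2 hi)]
            split_ifs <;> norm_num)
      rw [sum_ite_mem, sum_ite_mem, univ_inter, univ_inter] at key
      simp only [sum_const, smul_neg, nsmul_eq_mul, mul_one] at key
      have key' : #(B \ W) ≤ #Aᶜ := by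
        have : (#(B \ W) : ℚ) ≤ #Aᶜ := by linarith
        exact_mod_cast this
      have h1 := card_add_card_compl A
      have h2 : #N.toRight = Fintype.card U := by rw [hR, card_univ]
      have h3 : #B ≤ #(B \ W) + #W := by
        have := le_card_sdiff W B
        omega
      omega
  obtain ⟨f, hf, hfr⟩ :=
    (Fintype.all_card_le_filter_rel_iff_exists_injective (slackGraph E w u v)).1 hall
  have hfs : Function.Surjective f :=
    ((Fintype.bijective_iff_injective_and_card f).2
      ⟨hf, by simp [Fintype.card_sum, add_comm]⟩).2
  refine ⟨E.filter fun e => f (.inl e.1) = .inl e.2, filter_subset _ _, ?_, ?_, ?_, ?_⟩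
  · rintro ⟨i, j⟩ he ⟨i', j'⟩ he' h
    simp only [mem_filter] at he he' h
    rcases h with rfl | rfl
    · have := he.2.symm.trans he'.2
      simpa using this
    · have := hf (he.2.trans he'.2.symm)
      simpa using this
  · rintro ⟨i, j⟩ he
    have he' := (mem_filter.1 he).2
    have := hfr (.inl i)
    rw [he'] at this
    exact this.2
  · intro i hi
    have h := hfr (.inl i)
    rcases hfi : f (.inl i) with j | i'
    · rw [hfi] at h
      exact ⟨(i, j), mem_filter.2 ⟨h.1, hfi⟩, rfl⟩
    · rw [hfi] at h
      exact absurd h.2 hi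
  · intro j hj
    obtain ⟨a, ha⟩ := hfs (.inl j)
    have h := hfr a
    rw [ha] at h
    rcases a with i | j'
    · exact ⟨(i, j), mem_filter.2 ⟨h.1, ha⟩, rfl⟩
    · obtain ⟨rfl, h0⟩ := h
      exact absurd h0 hj

/-- Shapley–Shubik, sufficiency: every optimal dual solution is
a core imputation of the assignment game. -/
theorem optimal_dual_is_core_assignment {U V : Type*} [Fintype U] [Fintype V]
    (E : Finset (U × V)) (w : U × V → ℚ) (hw : ∀ e ∈ E, 0 ≤ w e)
    (u : U → ℚ) (v : V → ℚ) (hu : ∀ i, 0 ≤ u i) (hv : ∀ j, 0 ≤ v j)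
    (hfeas : ∀ e ∈ E, w e ≤ u e.1 + v e.2)
    (hopt : ∀ u' : U → ℚ, ∀ v' : V → ℚ, (∀ i, 0 ≤ u' i) → (∀ j, 0 ≤ v' j) →
      (∀ e ∈ E, w e ≤ u' e.1 + v' e.2) →
      (∑ i : U, u i) + (∑ j : V, v j) ≤ (∑ i : U, u' i) + (∑ j : V, v' j)) :
    ((∑ i : U, u i) + (∑ j : V, v j) = worth E w univ univ) ∧
    (∀ Su : Finset U, ∀ Sv : Finset V,
      worth E w Su Sv ≤ (∑ i ∈ Su, u i) + (∑ j ∈ Sv, v j)) := by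
  classical
  have hle : ∀ Su : Finset U, ∀ Sv : Finset V,
      worth E w Su Sv ≤ (∑ i ∈ Su, u i) + (∑ j ∈ Sv, v j) := by
    intro Su Sv
    refine sup'_le _ _ fun M hM => ?_
    simp only [mem_filter, mem_powerset] at hM
    exact matching_weight_le M hM.2.1 w u v hu hv (fun e he => hfeas e (hM.1 he)) Su Sv hM.2.2
  refine ⟨le_antisymm ?_ (hle univ univ), hle⟩
  obtain ⟨M, hME, hM, ht, hcu, hcv⟩ := exists_tight_matching E w u v hu hv hfeas hopt
  have h1 : ∑ e ∈ M, u e.1 = ∑ i, u i := by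
    rw [← sum_image (f := u) (g := Prod.fst) fun e he e' he' h => hM e he e' he' (Or.inl h)]
    refine sum_subset (subset_univ _) fun i _ hi => ?_
    by_contra h
    exact hi (mem_image.2 (hcu i h))
  have h2 : ∑ e ∈ M, v e.2 = ∑ j, v j := by
    rw [← sum_image (f := v) (g := Prod.snd) fun e he e' he' h => hM e he e' he' (Or.inr h)]
    refine sum_subset (subset_univ _) fun j _ hj => ?_
    by_contra h
    exact hj (mem_image.2 (hcv j h))
  have h3 : (∑ i, u i) + ∑ j, v j = ∑ e ∈ M, w e := by
    rw [sum_congr rfl ht, sum_add_distrib, h1, h2]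
  rw [h3]
  exact le_sup' (fun M => ∑ e ∈ M, w e) (by simp [hME, hM])
end

section
/- (Shapley–Shubik, necessity) Let G = (U, V, E) be a finite bipartite graph with nonnegative edge weights w : E → ℚ, and let (u, v) be a core imputation of the assignment game. Then (u, v) is an optimal dual solution: u(i) + v(j) ≥ w(i,j) for every edge (i,j) ∈ E, and ∑_{i ∈ U} u(i) + ∑_{j ∈ V} v(j) ≤ ∑_{i ∈ U} u'(i) + ∑_{j ∈ V} v'(j) for every pair of nonnegative functions (u', v') with u'(i) + v'(j) ≥ w(i,j) for every edge (i,j) ∈ E. -/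
/-!
Feasibility on an edge `(i, j)` is the core inequality for the coalition `{i, j}`, whose worth is at
least `w (i, j)` because the single edge is a matching. Optimality is weak LP duality: summing the
dual constraints over the edges of a matching charges each vertex at most once, so every
nonnegative dual feasible pair has total at least `worth E w univ univ`
(`worth_univ_le_of_dual_feasible`), which is the total of a core imputation.
-/

open Finset

/-- Weak duality between matchings and nonnegative dual feasible pairs. -/
theorem worth_univ_le_of_dual_feasible {U V : Type*} [Fintype U] [Fintype V]
    (E : Finset (U × V)) (w : U × V → ℚ) (u : U → ℚ) (v : V → ℚ)
    (hu : ∀ i, 0 ≤ u i) (hv : ∀ j, 0 ≤ v j) (h : ∀ e ∈ E, w e ≤ u e.1 + v e.2) :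
    worth E w univ univ ≤ (∑ i : U, u i) + (∑ j : V, v j) := by
  classical
  refine Finset.sup'_le _ _ fun M hM => ?_
  simp only [mem_filter, mem_powerset] at hM
  obtain ⟨hME, hmatch, -⟩ := hM
  -- Both projections are injective on a matching, so its edges hit each vertex at most once.
  have h1 : ∑ e ∈ M, u e.1 ≤ ∑ i : U, u i := by
    rw [← Finset.sum_image (s := M) (g := Prod.fst) (f := u)
      fun a ha b hb hab => hmatch a ha b hb (Or.inl hab)]
    exact Finset.sum_le_sum_of_subset_of_nonneg (subset_univ _) fun i _ _ => hu i
  have h2 : ∑ e ∈ M, v e.2 ≤ ∑ j : V, v j := by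
    rw [← Finset.sum_image (s := M) (g := Prod.snd) (f := v)
      fun a ha b hb hab => hmatch a ha b hb (Or.inr hab)]
    exact Finset.sum_le_sum_of_subset_of_nonneg (subset_univ _) fun j _ _ => hv j
  calc ∑ e ∈ M, w e ≤ ∑ e ∈ M, (u e.1 + v e.2) := Finset.sum_le_sum fun e he => h e (hME he)
    _ = ∑ e ∈ M, u e.1 + ∑ e ∈ M, v e.2 := Finset.sum_add_distrib
    _ ≤ _ := add_le_add h1 h2

theorem le_worth_singleton {U V : Type*} (E : Finset (U × V)) (w : U × V → ℚ)
    {e : U × V} (he : e ∈ E) : w e ≤ worth E w {e.1} {e.2} := by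
  classical
  have h := Finset.le_sup' (fun M : Finset (U × V) => ∑ e ∈ M, w e)
    (s := E.powerset.filter
      (fun M => IsMatchingF M ∧ ∀ f ∈ M, f.1 ∈ ({e.1} : Finset U) ∧ f.2 ∈ ({e.2} : Finset V)))
    (b := {e}) (by obtain ⟨i, j⟩ := e; simp +contextual [IsMatchingF, he])
  simp only [sum_singleton] at h
  unfold worth
  convert h

/-- Shapley–Shubik, necessity: every core imputation of the
assignment game is an optimal dual solution. -/
theorem core_is_optimal_dual_assignment {U V : Type*} [Fintype U] [Fintype V]
    (E : Finset (U × V)) (w : U × V → ℚ) (hw : ∀ e ∈ E, 0 ≤ w e)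
    (u : U → ℚ) (v : V → ℚ) (hu : ∀ i, 0 ≤ u i) (hv : ∀ j, 0 ≤ v j)
    (hsum : (∑ i : U, u i) + (∑ j : V, v j) = worth E w univ univ)
    (hcore : ∀ Su : Finset U, ∀ Sv : Finset V,
      worth E w Su Sv ≤ (∑ i ∈ Su, u i) + (∑ j ∈ Sv, v j)) :
    (∀ e ∈ E, w e ≤ u e.1 + v e.2) ∧
    (∀ u' : U → ℚ, ∀ v' : V → ℚ, (∀ i, 0 ≤ u' i) → (∀ j, 0 ≤ v' j) →
      (∀ e ∈ E, w e ≤ u' e.1 + v' e.2) →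
      (∑ i : U, u i) + (∑ j : V, v j) ≤ (∑ i : U, u' i) + (∑ j : V, v' j)) := by
  refine ⟨fun e he => ?_, fun u' v' hu' hv' h => ?_⟩
  · simpa using (le_worth_singleton E w he).trans (hcore {e.1} {e.2})
  · rw [hsum]
    exact worth_univ_le_of_dual_feasible E w u' v' hu' hv' h
end
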